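/- arXiv:2012.11927 — 2 statements merged into one kernel-verified Lean document; each statement's English description precedes it below -/
import Mathlib

section
/- Let k be a field and P a finite partially ordered set containing an element x that is comparable with every other element of P (for all y ∈ P, x ≤ y or y ≤ x). Let k[P] be the incidence algebra of P over k. Then the trivial extension algebra T(k[P]) is periodic if and only if it is twisted periodic. -/
open TensorProduct

/-- There is an exact sequence `0 → M → P_n → ⋯ → P_1 → N → 0` of `R`-modules
(so with `n` middle terms) in which each middle term `P_i` is projective. -/
def HasProjExactSeq (R : Type) [Ring R] (M N : ModuleCat R) (n : ℕ) : Prop :=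
  ∃ (P : ℕ → ModuleCat R) (d : ∀ i, P (i + 1) →ₗ[R] P i)
    (_ : (P 0 : Type) ≃ₗ[R] N) (_ : (M : Type) ≃ₗ[R] P (n + 1)),
    (∀ i, 1 ≤ i → i ≤ n → Module.Projective R (P i)) ∧
    Function.Surjective (d 0) ∧ Function.Injective (d n) ∧
    ∀ i < n, LinearMap.range (d (i + 1)) = LinearMap.ker (d i)

/-- The regular bimodule `B` as a module over the enveloping algebra `B ⊗[k] Bᵐᵒᵖ`. -/
noncomputable def regularBimodule (k B : Type) [Field k] [Ring B] [Algebra k B] :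
    ModuleCat (B ⊗[k] Bᵐᵒᵖ) :=
  letI : Module (B ⊗[k] Bᵐᵒᵖ) B := TensorProduct.Algebra.module
  ModuleCat.of _ B

/-- The twisted bimodule `₁B_φ` (underlying set `B`, right action twisted by `φ`,
i.e. `a • x • b = a * x * φ b`) as a module over the enveloping algebra `B ⊗[k] Bᵐᵒᵖ`. -/
noncomputable def twistedBimodule (k B : Type) [Field k] [Ring B] [Algebra k B]
    (φ : B ≃ₐ[k] B) : ModuleCat (B ⊗[k] Bᵐᵒᵖ) :=
  letI : Module (B ⊗[k] Bᵐᵒᵖ) B := TensorProduct.Algebra.module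
  letI : Module (B ⊗[k] Bᵐᵒᵖ) B :=
    Module.compHom B
      (Algebra.TensorProduct.map (AlgHom.id k B) (AlgEquiv.op φ).toAlgHom).toRingHom
  ModuleCat.of _ B

/-- A finite-dimensional `k`-algebra `B` is periodic if there are `n ≥ 1` and an exact
sequence `0 → B → P_{n-1} → ⋯ → P_0 → B → 0` of `B`-`B`-bimodules (modules over the
enveloping algebra `B ⊗[k] Bᵐᵒᵖ`) with all `P_i` projective. -/
noncomputable def IsPeriodicAlgebra (k B : Type) [Field k] [Ring B] [Algebra k B] : Prop :=
  ∃ n : ℕ, 1 ≤ n ∧ HasProjExactSeq (B ⊗[k] Bᵐᵒᵖ) (regularBimodule k B) (regularBimodule k B) n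

/-- A finite-dimensional `k`-algebra `B` is twisted periodic if there are `n ≥ 1`, an algebra
automorphism `φ` of `B`, and an exact sequence `0 → ₁B_φ → P_{n-1} → ⋯ → P_0 → B → 0` of
bimodules with all `P_i` projective over `B ⊗[k] Bᵐᵒᵖ`. -/
noncomputable def IsTwistedPeriodicAlgebra (k B : Type) [Field k] [Ring B] [Algebra k B] : Prop :=
  ∃ (n : ℕ) (φ : B ≃ₐ[k] B), 1 ≤ n ∧
    HasProjExactSeq (B ⊗[k] Bᵐᵒᵖ) (twistedBimodule k B φ) (regularBimodule k B) n

section DualBimodule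

variable (k A : Type) [Field k] [Ring A] [Algebra k A]

/-- The left `A`-action on `D(A) = Hom_k(A, k)`, given by `(a • f) x = f (x * a)`. -/
noncomputable instance Module.Dual.leftModule : Module A (Module.Dual k A) where
  smul a f := f ∘ₗ LinearMap.mulRight k a
  one_smul f := LinearMap.ext fun x => by show f (x * 1) = f x; rw [mul_one]
  mul_smul a b f := LinearMap.ext fun x => by
    show f (x * (a * b)) = f (x * a * b); rw [mul_assoc]
  smul_zero a := LinearMap.ext fun x => by show (0 : Module.Dual k A) (x * a) = 0; rfl
  smul_add a f g := LinearMap.ext fun x => by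
    show (f + g) (x * a) = f (x * a) + g (x * a); rfl
  add_smul a b f := LinearMap.ext fun x => by
    show f (x * (a + b)) = f (x * a) + f (x * b); rw [mul_add, map_add]
  zero_smul f := LinearMap.ext fun x => by show f (x * 0) = 0; rw [mul_zero, map_zero]

/-- The right `A`-action on `D(A) = Hom_k(A, k)`, given by `(f • op b) x = f (b * x)`. -/
noncomputable instance Module.Dual.rightModule : Module Aᵐᵒᵖ (Module.Dual k A) where
  smul b f := f ∘ₗ LinearMap.mulLeft k b.unop
  one_smul f := LinearMap.ext fun x => by show f (1 * x) = f x; rw [one_mul]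
  mul_smul a b f := LinearMap.ext fun x => by
    show f ((a * b).unop * x) = f (b.unop * (a.unop * x))
    rw [MulOpposite.unop_mul, mul_assoc]
  smul_zero a := LinearMap.ext fun x => by show (0 : Module.Dual k A) (a.unop * x) = 0; rfl
  smul_add a f g := LinearMap.ext fun x => by
    show (f + g) (a.unop * x) = f (a.unop * x) + g (a.unop * x); rfl
  add_smul a b f := LinearMap.ext fun x => by
    show f ((a + b).unop * x) = f (a.unop * x) + f (b.unop * x)
    rw [MulOpposite.unop_add, add_mul, map_add]
  zero_smul f := LinearMap.ext fun x => by
    show f ((0 : Aᵐᵒᵖ).unop * x) = 0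
    rw [MulOpposite.unop_zero, zero_mul, map_zero]

instance : SMulCommClass A Aᵐᵒᵖ (Module.Dual k A) where
  smul_comm a b f := LinearMap.ext fun x => by
    show f (b.unop * (x * a)) = f (b.unop * x * a); rw [mul_assoc]

instance : IsScalarTower k A (Module.Dual k A) where
  smul_assoc c a f := LinearMap.ext fun x => by
    show f (x * (c • a)) = c • f (x * a)
    rw [mul_smul_comm, map_smul]

instance : IsScalarTower k Aᵐᵒᵖ (Module.Dual k A) where
  smul_assoc c b f := LinearMap.ext fun x => by
    show f ((c • b).unop * x) = c • f (b.unop * x)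
    rw [MulOpposite.unop_smul, smul_mul_assoc, map_smul]

/-- The trivial extension algebra `T(A) = A ⊕ D(A)`. -/
noncomputable abbrev TrivialExtension : Type := TrivSqZeroExt A (Module.Dual k A)


end DualBimodule

namespace TrivExtPer

/-- Iterated syzygy predicate. -/
inductive Chain (R : Type) [Ring R] : ℕ → ModuleCat.{0} R → ModuleCat.{0} R → Prop
  | base (M N : ModuleCat.{0} R) (e : M ≃ₗ[R] N) : Chain R 0 M N
  | step (n : ℕ) (M N P K : ModuleCat.{0} R) (hP : Module.Projective R P)
      (f : P →ₗ[R] N) (hf : Function.Surjective f) (i : K →ₗ[R] P)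
      (hi : Function.Injective i) (hex : LinearMap.range i = LinearMap.ker f)
      (h : Chain R n M K) : Chain R (n + 1) M N

variable {R : Type} [Ring R]

theorem Chain.congr_right {n : ℕ} {M N N' : ModuleCat.{0} R} (h : Chain R n M N)
    (e : N ≃ₗ[R] N') : Chain R n M N' := by
  cases h with
  | base _ _ e' => exact .base _ _ (e'.trans e)
  | step n _ _ P K hP f hf i hi hex h =>
    refine .step n _ _ P K hP (e.toLinearMap ∘ₗ f) (e.surjective.comp hf) i hi ?_ h
    rw [hex, LinearEquiv.ker_comp]

theorem Chain.congr_left {n : ℕ} {M M' N : ModuleCat.{0} R} (h : Chain R n M N)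
    (e : M' ≃ₗ[R] M) : Chain R n M' N := by
  induction h with
  | base _ _ e' => exact .base _ _ (e.trans e')
  | step n _ _ P K hP f hf i hi hex h ih =>
    exact .step n _ _ P K hP f hf i hi hex (ih e)

theorem Chain.trans {n m : ℕ} {L M N : ModuleCat.{0} R} (h : Chain R n M N)
    (h' : Chain R m L M) : Chain R (m + n) L N := by
  induction h with
  | base _ _ e' => exact h'.congr_right e'
  | step n _ _ P K hP f hf i hi hex h ih =>
    exact .step (m + n) _ _ P K hP f hf i hi hex (ih h')

/-- restriction along a ring automorphism -/
noncomputable abbrev tw (σ : R ≃+* R) (M : ModuleCat.{0} R) : ModuleCat.{0} R :=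
  (ModuleCat.restrictScalars (σ : R →+* R)).obj M

theorem tw_smul (σ : R ≃+* R) (M : ModuleCat.{0} R) (r : R) (m : M) :
    (r • (show tw σ M from m) : tw σ M) = (σ r • m : M) := rfl

/-- twist of a map -/
noncomputable def twMap (σ : R ≃+* R) {M N : ModuleCat.{0} R} (f : M →ₗ[R] N) : tw σ M →ₗ[R] tw σ N where
  toFun m := f m
  map_add' x y := f.map_add x y
  map_smul' r x := f.map_smul (σ r) x

theorem tw_projective (σ : R ≃+* R) (M : ModuleCat.{0} R) (h : Module.Projective R M) :
    Module.Projective R (tw σ M) := by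
  have i1 : RingHomInvPair (σ.symm : R →+* R) (σ : R →+* R) := RingHomInvPair.of_ringEquiv σ.symm
  have i2 : RingHomInvPair (σ : R →+* R) (σ.symm : R →+* R) := RingHomInvPair.of_ringEquiv σ
  have e : M ≃ₛₗ[(σ.symm : R →+* R)] tw σ M :=
    { toFun := fun m => m
      invFun := fun m => m
      left_inv := fun _ => rfl
      right_inv := fun _ => rfl
      map_add' := fun _ _ => rfl
      map_smul' := fun r x => by
        show (r • x : M) = (σ (σ.symm r) • x : M)
        simp }
  exact Module.Projective.of_equiv e

theorem Chain.tw (σ : R ≃+* R) {n : ℕ} {M N : ModuleCat.{0} R} (h : Chain R n M N) :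
    Chain R n (tw σ M) (tw σ N) := by
  induction h with
  | base M N e =>
    refine .base _ _ (LinearEquiv.ofBijective (twMap σ e.toLinearMap) e.bijective)
  | step n M N P K hP f hf i hi hex h ih =>
    refine .step n _ _ _ _ (tw_projective σ P hP) (twMap σ f) hf (twMap σ i) hi ?_ ih
    ext x
    exact (Submodule.ext_iff.1 hex x)

theorem chain_of_seq {M N : ModuleCat.{0} R} {n : ℕ} (h : HasProjExactSeq R M N n) :
    Chain R n M N := by
  obtain ⟨P, d, e0, e1, hP, hs, hi, hex⟩ := h
  have key : ∀ j i, i + j = n →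
      Chain R j M (ModuleCat.of R (LinearMap.range (d i))) := by
    intro j
    induction j with
    | zero =>
      intro i hij
      obtain rfl : i = n := by omega
      exact .base _ _ (e1.trans (LinearEquiv.ofInjective _ hi))
    | succ j ih =>
      intro i hij
      refine .step j _ _ (P (i+1)) _ (hP _ (by omega) (by omega)) (d i).rangeRestrict
        (LinearMap.surjective_rangeRestrict _) (Submodule.subtype _)
        (Submodule.injective_subtype _) ?_ (ih (i + 1) (by omega))
      rw [LinearMap.ker_rangeRestrict]
      simpa using hex i (by omega)
  refine (key n 0 (by omega)).congr_right ?_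
  exact ((LinearEquiv.ofEq _ _ (LinearMap.range_eq_top.2 hs)).trans
    Submodule.topEquiv).trans e0

theorem seq_of_chain {M N : ModuleCat.{0} R} {n : ℕ} (h : Chain R n M N) :
    HasProjExactSeq R M N n := by
  induction h with
  | base M N e =>
    refine ⟨fun _ => N, fun _ => LinearMap.id, LinearEquiv.refl _ _, e, ?_, ?_, ?_, ?_⟩
    · intro i h1 h2; omega
    · exact Function.surjective_id
    · exact Function.injective_id
    · intro i hi; omega
  | step n M N Q K hQ f hf j hj hjf h ih =>
    obtain ⟨P, d, e0, e1, hP, hs, hi, hex⟩ := ih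
    refine ⟨fun i => match i with
        | 0 => N
        | 1 => Q
        | i + 2 => P (i + 1),
      fun i => match i with
        | 0 => f
        | 1 => (j ∘ₗ e0.toLinearMap) ∘ₗ d 0
        | i + 2 => d (i + 1), LinearEquiv.refl _ _, e1, ?_, hf, ?_, ?_⟩
    · intro i h1 h2
      match i, h1 with
      | 1, _ => exact hQ
      | i + 2, _ => exact hP (i + 1) (by omega) (by omega)
    · match n, hi with
      | 0, hi => exact (hj.comp e0.injective).comp hi
      | n + 1, hi => exact hi
    · intro i hin
      match i with
      | 0 =>
        show LinearMap.range ((j ∘ₗ e0.toLinearMap) ∘ₗ d 0) = LinearMap.ker f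
        rw [LinearMap.range_comp_of_range_eq_top _ (LinearMap.range_eq_top.2 hs),
          LinearMap.range_comp_of_range_eq_top _ (LinearEquiv.range e0), hjf]
      | 1 =>
        show LinearMap.range (d 1) = LinearMap.ker ((j ∘ₗ e0.toLinearMap) ∘ₗ d 0)
        rw [hex 0 (by omega), LinearMap.ker_comp_of_ker_eq_bot]
        exact LinearMap.ker_eq_bot.2 (hj.comp e0.injective)
      | i + 2 => exact hex (i + 1) (by omega)

end TrivExtPer
namespace TrivExtPer

section Trace

variable {k B : Type} [Field k] [Ring B] [Algebra k B]

/-- the operator of an element of the enveloping algebra -/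
noncomputable abbrev op (M : Type) [AddCommGroup M] [Module k M]
    [Module (B ⊗[k] Bᵐᵒᵖ) M] [IsScalarTower k (B ⊗[k] Bᵐᵒᵖ) M] (r : B ⊗[k] Bᵐᵒᵖ) :
    M →ₗ[k] M := Algebra.lsmul k k M r

/-- left multiplication element -/
noncomputable abbrev lf (k : Type) {B : Type} [Field k] [Ring B] [Algebra k B] (x : B) :
    B ⊗[k] Bᵐᵒᵖ := x ⊗ₜ 1
/-- right multiplication element -/
noncomputable abbrev rt (k : Type) {B : Type} [Field k] [Ring B] [Algebra k B] (x : B) :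
    B ⊗[k] Bᵐᵒᵖ := 1 ⊗ₜ MulOpposite.op x

variable {ι : Type} [Fintype ι] (b : ι → B) (s : ι ≃ ι)

variable {M N L : Type} [AddCommGroup M] [Module k M]
    [Module (B ⊗[k] Bᵐᵒᵖ) M] [IsScalarTower k (B ⊗[k] Bᵐᵒᵖ) M]
    [AddCommGroup N] [Module k N]
    [Module (B ⊗[k] Bᵐᵒᵖ) N] [IsScalarTower k (B ⊗[k] Bᵐᵒᵖ) N]
    [AddCommGroup L] [Module k L]
    [Module (B ⊗[k] Bᵐᵒᵖ) L] [IsScalarTower k (B ⊗[k] Bᵐᵒᵖ) L]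

/-- Casimir averaging -/
noncomputable def Cas (f : M →ₗ[k] N) : M →ₗ[k] N :=
  ∑ i, op N (lf k (b i)) ∘ₗ f ∘ₗ op M (lf k (b (s i)))

theorem Cas_apply (f : M →ₗ[k] N) (m : M) :
    Cas b s f m = ∑ i, lf k (b i) • f (lf k (b (s i)) • m) := by
  simp [Cas]

/-- left linear maps -/
def LL (B : Type) [Ring B] [Algebra k B] {M N : Type} [AddCommGroup M] [Module k M]
    [Module (B ⊗[k] Bᵐᵒᵖ) M] [IsScalarTower k (B ⊗[k] Bᵐᵒᵖ) M]
    [AddCommGroup N] [Module k N]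
    [Module (B ⊗[k] Bᵐᵒᵖ) N] [IsScalarTower k (B ⊗[k] Bᵐᵒᵖ) N] (f : M →ₗ[k] N) : Prop := ∀ (x : B) (m : M), f (lf k x • m) = lf k x • f m

theorem Cas_comp_left (g : N →ₗ[k] L) (hg : LL B g) (f : M →ₗ[k] N) :
    Cas b s (g ∘ₗ f) = g ∘ₗ Cas b s f := by
  ext m
  simp only [Cas_apply, LinearMap.comp_apply, map_sum, hg _ _]

theorem Cas_comp_right (g : N →ₗ[k] L) (f : M →ₗ[k] N) (hf : LL B f) :
    Cas b s (g ∘ₗ f) = Cas b s g ∘ₗ f := by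
  ext m
  simp only [Cas_apply, LinearMap.comp_apply, hf _ _]

theorem LL.comp {g : N →ₗ[k] L} {f : M →ₗ[k] N} (hg : LL B g) (hf : LL B f) : LL B (g ∘ₗ f) := by
  intro x m
  simp [hf x m, hg x (f m)]

theorem LL_of (f : M →ₗ[B ⊗[k] Bᵐᵒᵖ] N) : LL B (f.restrictScalars k) := by
  intro x m; simp

theorem LL_rt (r : B) : LL B (op M (rt k r)) := by
  intro x m
  simp [smul_smul]

theorem Cas_LL (t : B →ₗ[k] k) (ht : ∀ x y, t (x * y) = t (y * x)) (hs : ∀ i, s (s i) = i)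
    (hb : ∀ y, ∑ j, t (b (s j) * y) • b j = y) (f : M →ₗ[k] N) : LL B (Cas b s f) := by
  intro x m
  have hb2 : ∀ y, ∑ j, t (y * b j) • b (s j) = y := by
    intro y
    conv_rhs => rw [← hb y]
    rw [← Equiv.sum_comp s]
    refine Finset.sum_congr rfl fun j _ => ?_
    rw [hs, ht]
  have e1 : ∀ i, b (s i) * x = ∑ j, t (b (s i) * x * b j) • b (s j) := fun i => (hb2 _).symm
  have e2 : ∀ i, x * b i = ∑ j, t (b (s j) * (x * b i)) • b j := fun i => (hb _).symm
  have lfs : ∀ (y : B) (c : k), lf k (c • y) = c • lf k y := fun y c => by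
    simp [lf, TensorProduct.smul_tmul']
  have lfsum : ∀ (g : ι → B), lf k (∑ i, g i) = ∑ i, lf k (g i) := fun g => by
    simp [lf, TensorProduct.sum_tmul]
  have lfm : ∀ (y z : B), lf k y * lf k z = lf k (y * z) := fun y z => by simp [lf]
  rw [Cas_apply, Cas_apply, Finset.smul_sum]
  calc _ = ∑ i, ∑ j, t (b (s i) * x * b j) • (lf k (b i) • f (lf k (b (s j)) • m)) := by
        refine Finset.sum_congr rfl fun i _ => ?_
        conv_lhs => rw [smul_smul (lf k _), lfm, e1, lfsum, Finset.sum_smul, map_sum,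
          Finset.smul_sum]
        refine Finset.sum_congr rfl fun j _ => ?_
        rw [lfs, smul_assoc, map_smul, smul_comm]
    _ = ∑ j, ∑ i, t (b (s i) * x * b j) • (lf k (b i) • f (lf k (b (s j)) • m)) :=
        Finset.sum_comm
    _ = _ := by
        refine Finset.sum_congr rfl fun j _ => ?_
        rw [smul_smul (lf k _), lfm, e2, lfsum, Finset.sum_smul]
        refine Finset.sum_congr rfl fun i _ => ?_
        rw [lfs, smul_assoc, mul_assoc]

theorem trace_Cas (hs : ∀ i, s (s i) = i) [FiniteDimensional k M]
    (f g : M →ₗ[k] M) :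
    LinearMap.trace k M (f ∘ₗ Cas b s g) = LinearMap.trace k M (Cas b s f ∘ₗ g) := by
  simp only [Cas, ← Module.End.mul_eq_comp, Finset.mul_sum, Finset.sum_mul, map_sum]
  rw [← Equiv.sum_comp s]
  refine Finset.sum_congr rfl fun i _ => ?_
  rw [hs]
  rw [show f * (op M (lf k (b (s i))) * (g * op M (lf k (b i)))) =
    (f * (op M (lf k (b (s i))) * g)) * op M (lf k (b i)) by simp only [mul_assoc],
    LinearMap.trace_mul_comm]
  simp only [mul_assoc]

theorem trace_cyc (hs : ∀ i, s (s i) = i) [FiniteDimensional k M]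
    (θ : M →ₗ[k] M) (hθ : Cas b s θ = LinearMap.id)
    (θ' : N →ₗ[k] N) (hθ' : Cas b s θ' = LinearMap.id)
    (β : N →ₗ[k] M) (hβ : LL B β) (α : M →ₗ[k] N) (hα : LL B α) :
    LinearMap.trace k M (θ ∘ₗ β ∘ₗ α) = LinearMap.trace k M (β ∘ₗ θ' ∘ₗ α) := by
  have : β ∘ₗ α = Cas b s (β ∘ₗ θ' ∘ₗ α) := by
    rw [Cas_comp_left b s β hβ, Cas_comp_right b s θ' α hα, hθ', LinearMap.id_comp]
  rw [this, trace_Cas b s hs, hθ, LinearMap.id_comp]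

/-- existence of good theta on projectives -/
theorem exists_theta (t : B →ₗ[k] k)
    (hb : ∀ y, ∑ j, t (b (s j) * y) • b j = y) [Module.Projective (B ⊗[k] Bᵐᵒᵖ) M] :
    ∃ θ : M →ₗ[k] M, Cas b s θ = LinearMap.id ∧
      ∀ r : B, ∀ m, θ (rt k r • m) = rt k r • θ m := by
  obtain ⟨σ, hσ⟩ := Module.projective_def'.1 ‹Module.Projective (B ⊗[k] Bᵐᵒᵖ) M›
  let θ0 : B →ₗ[k] B := t.smulRight 1
  let θR : B ⊗[k] Bᵐᵒᵖ →ₗ[k] B ⊗[k] Bᵐᵒᵖ := TensorProduct.map θ0 LinearMap.id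
  have h1 : ∀ z : B ⊗[k] Bᵐᵒᵖ, ∑ i, lf k (b i) * θR (lf k (b (s i)) * z) = z := by
    intro z
    induction z using TensorProduct.induction_on with
    | zero => simp
    | add x y hx hy => simp only [mul_add, map_add, Finset.sum_add_distrib, hx, hy]
    | tmul x y =>
      simp only [lf, Algebra.TensorProduct.tmul_mul_tmul, one_mul, θR, TensorProduct.map_tmul,
        LinearMap.id_apply, θ0, LinearMap.smulRight_apply, mul_smul_comm, mul_one,
        ← TensorProduct.sum_tmul, hb]
  have h2 : ∀ (r : B) (z : B ⊗[k] Bᵐᵒᵖ), θR (rt k r * z) = rt k r * θR z := by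
    intro r z
    induction z using TensorProduct.induction_on with
    | zero => simp
    | add x y hx hy => simp only [mul_add, map_add, hx, hy]
    | tmul x y => simp [rt, θR]
  let θF : (M →₀ B ⊗[k] Bᵐᵒᵖ) →ₗ[k] (M →₀ B ⊗[k] Bᵐᵒᵖ) := Finsupp.mapRange.linearMap θR
  have hF1 : Cas (M := M →₀ B ⊗[k] Bᵐᵒᵖ) (N := M →₀ B ⊗[k] Bᵐᵒᵖ) b s θF = LinearMap.id := by
    apply LinearMap.ext
    intro z
    ext m
    simp only [Cas_apply, Finsupp.coe_finsetSum, Finset.sum_apply, LinearMap.id_apply]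
    exact h1 (z m)
  have hF2 : ∀ r : B, ∀ m, θF (rt k r • m) = rt k r • θF m := by
    intro r z
    ext m
    exact h2 r (z m)
  let p := Finsupp.linearCombination (B ⊗[k] Bᵐᵒᵖ) (id : M → M)
  refine ⟨p.restrictScalars k ∘ₗ θF ∘ₗ σ.restrictScalars k, ?_, ?_⟩
  · ext m
    have h3 := DFunLike.congr_fun hF1 (σ m)
    rw [Cas_apply] at h3
    rw [Cas_apply]
    simp only [LinearMap.comp_apply, LinearMap.restrictScalars_apply, map_smul]
    simp only [← map_smul p]
    rw [← map_sum p]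
    refine (congrArg p h3).trans ?_
    exact DFunLike.congr_fun hσ m
  · intro r m
    simp only [LinearMap.comp_apply, LinearMap.restrictScalars_apply, map_smul, hF2]

theorem trace_zero [FiniteDimensional k M] (r : B) (hr : IsNilpotent r) (f : M →ₗ[k] M)
    (hf : ∀ m, f (rt k r • m) = rt k r • f m) :
    LinearMap.trace k M (f ∘ₗ op M (rt k r)) = 0 := by
  have h : Commute f (op M (rt k r)) := by
    ext m
    exact hf m
  have h2 : IsNilpotent (op M (rt k r)) := by
    have : IsNilpotent (rt k r) := by
      obtain ⟨n, hn⟩ := hr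
      refine ⟨n, ?_⟩
      rw [rt, Algebra.TensorProduct.tmul_pow, ← MulOpposite.op_pow, hn]
      simp
    exact this.map (Algebra.lsmul k k M)
  exact (LinearMap.isNilpotent_trace_of_isNilpotent (h.isNilpotent_mul_left h2)).eq_zero

end Trace

end TrivExtPer
namespace TrivExtPer

section Trace2

set_option linter.unusedSectionVars false

variable {k B : Type} [Field k] [Ring B] [Algebra k B] [FiniteDimensional k B]

variable {ι : Type} [Fintype ι] (b : ι → B) (s : ι ≃ ι) (t : B →ₗ[k] k)

theorem trace_step (ht : ∀ x y, t (x * y) = t (y * x)) (hs : ∀ i, s (s i) = i)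
    (hb : ∀ y, ∑ j, t (b (s j) * y) • b j = y)
    {K G K' : Type} [AddCommGroup K'] [Module k K']
    [Module (B ⊗[k] Bᵐᵒᵖ) K'] [IsScalarTower k (B ⊗[k] Bᵐᵒᵖ) K'] [FiniteDimensional k K'] [AddCommGroup K] [Module k K]
    [Module (B ⊗[k] Bᵐᵒᵖ) K] [IsScalarTower k (B ⊗[k] Bᵐᵒᵖ) K]
    [AddCommGroup G] [Module k G]
    [Module (B ⊗[k] Bᵐᵒᵖ) G] [IsScalarTower k (B ⊗[k] Bᵐᵒᵖ) G]
    [FiniteDimensional k K] [FiniteDimensional k G]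
    [Module.Projective (B ⊗[k] Bᵐᵒᵖ) G]
    (p : G →ₗ[B ⊗[k] Bᵐᵒᵖ] K) (hp : Function.Surjective p)
    (i : K' →ₗ[B ⊗[k] Bᵐᵒᵖ] G) (hi : Function.Injective i)
    (hex : LinearMap.range i = LinearMap.ker p)
    (θ : K →ₗ[k] K) (hθ : Cas b s θ = LinearMap.id)
    (h : K →ₗ[B ⊗[k] Bᵐᵒᵖ] K) (H : G →ₗ[B ⊗[k] Bᵐᵒᵖ] G)
    (h' : K' →ₗ[B ⊗[k] Bᵐᵒᵖ] K')
    (e1 : ∀ g, p (H g) = h (p g)) (e2 : ∀ g, i (h' g) = H (i g))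
    (r : B) (hr : IsNilpotent r) :
    ∃ θ' : K' →ₗ[k] K', Cas b s θ' = LinearMap.id ∧
      LinearMap.trace k _ (θ' ∘ₗ h'.restrictScalars k ∘ₗ op K' (rt k r)) =
      - LinearMap.trace k _ (θ ∘ₗ h.restrictScalars k ∘ₗ op K (rt k r)) := by
  obtain ⟨s0, hs0⟩ := (p.restrictScalars k).exists_rightInverse_of_surjective
    (LinearMap.range_eq_top.2 hp)
  let pk : G →ₗ[k] K := p.restrictScalars k
  have hpk : LL B pk := LL_of p
  let σ : K →ₗ[k] G := Cas b s (s0 ∘ₗ θ)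
  have hσ : LL B σ := Cas_LL b s t ht hs hb _
  have hpσ : pk ∘ₗ σ = LinearMap.id := by
    rw [← Cas_comp_left b s pk hpk, ← LinearMap.comp_assoc, hs0, LinearMap.id_comp, hθ]
  have hpσ' : ∀ x, p (σ x) = x := fun x => DFunLike.congr_fun hpσ x
  let ik : K' →ₗ[k] G := i.restrictScalars k
  have hpi : ∀ x, p (i x) = 0 := fun x => by
    have : i x ∈ LinearMap.ker p := hex ▸ LinearMap.mem_range_self i x
    exact this
  have hπ0 : ∀ g, ∃ y, i y = g - σ (p g) := fun g => by
    have : g - σ (p g) ∈ LinearMap.range i := by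
      rw [hex]
      simp [hpσ']
    exact this
  choose π0 hπ0 using hπ0
  let π : G →ₗ[k] K' :=
    { toFun := π0
      map_add' := fun x y => by apply hi; simp [hπ0]; abel
      map_smul' := fun c x => by
        apply hi
        simp only [hπ0, LinearMap.map_smul_of_tower, RingHom.id_apply, smul_sub] }
  have hiπ : ∀ x, i (π x) = x - σ (p x) := hπ0
  have hπ : LL B π := by
    intro x m
    apply hi
    rw [hiπ, map_smul i, hiπ, map_smul p, hσ, smul_sub]
  have hik : LL B ik := LL_of _
  have hπi : π ∘ₗ ik = LinearMap.id := by
    ext x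
    apply hi
    simp [hiπ, ik, hpi]
  have hsum : ik ∘ₗ π + σ ∘ₗ pk = LinearMap.id := by
    ext x
    simp [hiπ, ik, pk]
  obtain ⟨θG, hG1, hG2⟩ := exists_theta (M := G) b s t hb
  have hθ' : Cas b s (π ∘ₗ θG ∘ₗ ik) = LinearMap.id := by
    rw [Cas_comp_left b s π hπ, Cas_comp_right b s θG ik hik, hG1, LinearMap.id_comp, hπi]
  refine ⟨π ∘ₗ θG ∘ₗ ik, hθ', ?_⟩
  set θ' := π ∘ₗ θG ∘ₗ ik with hθ'def
  let θ2 := ik ∘ₗ θ' ∘ₗ π + σ ∘ₗ θ ∘ₗ pk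
  have hadd : ∀ f g : G →ₗ[k] G, Cas b s (f + g) = Cas b s f + Cas b s g := by
    intro f g
    ext m
    simp [Cas_apply, Finset.sum_add_distrib]
  have hθ2 : Cas b s θ2 = LinearMap.id := by
    rw [hadd, Cas_comp_left b s ik hik, Cas_comp_right b s θ' π hπ, hθ',
      Cas_comp_left b s σ hσ, Cas_comp_right b s θ pk hpk, hθ, LinearMap.id_comp,
      LinearMap.id_comp, hsum]
  let Hk := H.restrictScalars k
  have hz : LinearMap.trace k G (θ2 ∘ₗ Hk ∘ₗ op G (rt k r)) = 0 := by
    have := trace_cyc b s hs θ2 hθ2 θG hG1 LinearMap.id (fun _ _ => rfl)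
      (Hk ∘ₗ op G (rt k r)) ((LL_of H).comp (LL_rt r))
    rw [LinearMap.id_comp, LinearMap.id_comp] at this
    rw [this, ← LinearMap.comp_assoc]
    refine trace_zero r hr _ ?_
    intro m
    simp [Hk, hG2]
  have h1 : LinearMap.trace k G ((ik ∘ₗ θ' ∘ₗ π) ∘ₗ Hk ∘ₗ op G (rt k r)) =
      LinearMap.trace k _ (θ' ∘ₗ h'.restrictScalars k ∘ₗ op K' (rt k r)) := by
    rw [LinearMap.comp_assoc, LinearMap.trace_comp_comm']
    congr 1
    ext x
    simp only [LinearMap.comp_apply, Algebra.lsmul_coe]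
    congr 1
    have : Hk (rt k r • ik x) = ik (h' (rt k r • x)) := by
      simp [Hk, ik, e2]
    rw [this]
    exact DFunLike.congr_fun hπi _
  have h2 : LinearMap.trace k G ((σ ∘ₗ θ ∘ₗ pk) ∘ₗ Hk ∘ₗ op G (rt k r)) =
      LinearMap.trace k _ (θ ∘ₗ h.restrictScalars k ∘ₗ op K (rt k r)) := by
    rw [LinearMap.comp_assoc, LinearMap.trace_comp_comm']
    congr 1
    ext x
    simp [pk, Hk, e1, hpσ']
  have h3 : θ2 ∘ₗ Hk ∘ₗ op G (rt k r) = (ik ∘ₗ θ' ∘ₗ π) ∘ₗ Hk ∘ₗ op G (rt k r) +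
      (σ ∘ₗ θ ∘ₗ pk) ∘ₗ Hk ∘ₗ op G (rt k r) := LinearMap.add_comp _ _ _
  rw [h3, map_add, h1, h2] at hz
  exact eq_neg_of_add_eq_zero_left hz

/-- the trace invariant -/
def Good (r : B) (U : ModuleCat.{0} (B ⊗[k] Bᵐᵒᵖ)) (c : k) : Prop :=
  ∃ (K : Type) (_ : AddCommGroup K) (_ : Module k K) (_ : Module (B ⊗[k] Bᵐᵒᵖ) K)
    (_ : IsScalarTower k (B ⊗[k] Bᵐᵒᵖ) K) (_ : FiniteDimensional k K) (θ : K →ₗ[k] K)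
    (u : K →ₗ[B ⊗[k] Bᵐᵒᵖ] U) (v : U →ₗ[B ⊗[k] Bᵐᵒᵖ] K)
    (F : ModuleCat.{0} (B ⊗[k] Bᵐᵒᵖ)) (_ : Module.Projective (B ⊗[k] Bᵐᵒᵖ) F)
    (α : U →ₗ[B ⊗[k] Bᵐᵒᵖ] F) (β : F →ₗ[B ⊗[k] Bᵐᵒᵖ] U),
    Cas b s θ = LinearMap.id ∧
    LinearMap.trace k K (θ ∘ₗ (v ∘ₗ u).restrictScalars k ∘ₗ op K (rt k r)) = c ∧
    ∀ x, u (v x) = x + β (α x)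

theorem Good.iso {r : B} {U U' : ModuleCat.{0} (B ⊗[k] Bᵐᵒᵖ)} {c : k} (h : Good b s r U c)
    (e : U ≃ₗ[B ⊗[k] Bᵐᵒᵖ] U') : Good b s r U' c := by
  obtain ⟨K, i1, i2, i3, i4, i5, θ, u, v, F, hF, α, β, h1, h2, h3⟩ := h
  refine ⟨K, i1, i2, i3, i4, i5, θ, e.toLinearMap ∘ₗ u, v ∘ₗ e.symm.toLinearMap, F, hF,
    α ∘ₗ e.symm.toLinearMap, e.toLinearMap ∘ₗ β, h1, ?_, ?_⟩
  · rw [← h2]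
    congr 2
    congr 1
    ext x
    simp
  · intro x
    simp [h3]

theorem Good.mk (r : B) (U : ModuleCat.{0} (B ⊗[k] Bᵐᵒᵖ)) (c : k)
    {K : Type} [AddCommGroup K] [Module k K] [Module (B ⊗[k] Bᵐᵒᵖ) K]
    [IsScalarTower k (B ⊗[k] Bᵐᵒᵖ) K] [FiniteDimensional k K] (θ : K →ₗ[k] K)
    (u : K →ₗ[B ⊗[k] Bᵐᵒᵖ] U) (v : U →ₗ[B ⊗[k] Bᵐᵒᵖ] K)
    (F : ModuleCat.{0} (B ⊗[k] Bᵐᵒᵖ)) (hF : Module.Projective (B ⊗[k] Bᵐᵒᵖ) F)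
    (α : U →ₗ[B ⊗[k] Bᵐᵒᵖ] F) (β : F →ₗ[B ⊗[k] Bᵐᵒᵖ] U)
    (h1 : Cas b s θ = LinearMap.id)
    (h2 : LinearMap.trace k K (θ ∘ₗ (v ∘ₗ u).restrictScalars k ∘ₗ op K (rt k r)) = c)
    (h3 : ∀ x, u (v x) = x + β (α x)) : Good b s r U c :=
  ⟨K, inferInstance, inferInstance, inferInstance, inferInstance, inferInstance, θ, u, v, F, hF,
    α, β, h1, h2, h3⟩

theorem Good.step_aux (ht : ∀ x y, t (x * y) = t (y * x)) (hs : ∀ i, s (s i) = i)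
    (hb : ∀ y, ∑ j, t (b (s j) * y) • b j = y) {r : B} (hr : IsNilpotent r)
    {U P N : ModuleCat.{0} (B ⊗[k] Bᵐᵒᵖ)} {c : k}
    (hP : Module.Projective (B ⊗[k] Bᵐᵒᵖ) P) (f : P →ₗ[B ⊗[k] Bᵐᵒᵖ] U)
    (hf : Function.Surjective f)
    (j : N →ₗ[B ⊗[k] Bᵐᵒᵖ] P) (hj : Function.Injective j)
    (hex : LinearMap.range j = LinearMap.ker f)
    {K : Type} [AddCommGroup K] [Module k K] [Module (B ⊗[k] Bᵐᵒᵖ) K]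
    [IsScalarTower k (B ⊗[k] Bᵐᵒᵖ) K] [FiniteDimensional k K] (θ : K →ₗ[k] K)
    (u : K →ₗ[B ⊗[k] Bᵐᵒᵖ] U) (v : U →ₗ[B ⊗[k] Bᵐᵒᵖ] K)
    (F : ModuleCat.{0} (B ⊗[k] Bᵐᵒᵖ)) (hF : Module.Projective (B ⊗[k] Bᵐᵒᵖ) F)
    (α : U →ₗ[B ⊗[k] Bᵐᵒᵖ] F) (β : F →ₗ[B ⊗[k] Bᵐᵒᵖ] U)
    (h1 : Cas b s θ = LinearMap.id)
    (h2 : LinearMap.trace k K (θ ∘ₗ (v ∘ₗ u).restrictScalars k ∘ₗ op K (rt k r)) = c)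
    (h3 : ∀ x, u (v x) = x + β (α x))
    {G : Type} [AddCommGroup G] [Module k G] [Module (B ⊗[k] Bᵐᵒᵖ) G]
    [IsScalarTower k (B ⊗[k] Bᵐᵒᵖ) G] [FiniteDimensional k G]
    [Module.Projective (B ⊗[k] Bᵐᵒᵖ) G]
    (p : G →ₗ[B ⊗[k] Bᵐᵒᵖ] K) (hp : Function.Surjective p)
    {K' : Type} [AddCommGroup K'] [Module k K'] [Module (B ⊗[k] Bᵐᵒᵖ) K']
    [IsScalarTower k (B ⊗[k] Bᵐᵒᵖ) K'] [FiniteDimensional k K']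
    (i : K' →ₗ[B ⊗[k] Bᵐᵒᵖ] G) (hi : Function.Injective i)
    (hex' : LinearMap.range i = LinearMap.ker p) :
    Good b s r N (-c) := by
  obtain ⟨U1, hU1⟩ := Module.projective_lifting_property f (u ∘ₗ p) hf
  obtain ⟨V1, hV1⟩ := Module.projective_lifting_property p (v ∘ₗ f) hp
  obtain ⟨β1, hβ1⟩ := Module.projective_lifting_property f β hf
  replace hU1 : ∀ x, f (U1 x) = u (p x) := fun x => DFunLike.congr_fun hU1 x
  replace hV1 : ∀ x, p (V1 x) = v (f x) := fun x => DFunLike.congr_fun hV1 x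
  replace hβ1 : ∀ x, f (β1 x) = β x := fun x => DFunLike.congr_fun hβ1 x
  have hfj : ∀ x, f (j x) = 0 := fun x => by
    have : j x ∈ LinearMap.ker f := hex ▸ LinearMap.mem_range_self j x
    exact this
  have hpi : ∀ x, p (i x) = 0 := fun x => by
    have : i x ∈ LinearMap.ker p := hex' ▸ LinearMap.mem_range_self i x
    exact this
  have liftN : ∀ {X : Type} [AddCommGroup X] [Module (B ⊗[k] Bᵐᵒᵖ) X]
      (g : X →ₗ[B ⊗[k] Bᵐᵒᵖ] P) (_ : ∀ x, f (g x) = 0),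
      ∃ g' : X →ₗ[B ⊗[k] Bᵐᵒᵖ] N, ∀ x, j (g' x) = g x := by
    intro X _ _ g hg
    have h : ∀ x, ∃ y, j y = g x := fun x => by
      have : g x ∈ LinearMap.range j := by rw [hex]; exact hg x
      exact this
    choose g' hg' using h
    exact ⟨{ toFun := g'
             map_add' := fun x y => by apply hj; simp [hg']
             map_smul' := fun c x => by apply hj; simp [hg'] }, hg'⟩
  have liftK : ∀ {X : Type} [AddCommGroup X] [Module (B ⊗[k] Bᵐᵒᵖ) X]
      (g : X →ₗ[B ⊗[k] Bᵐᵒᵖ] G) (_ : ∀ x, p (g x) = 0),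
      ∃ g' : X →ₗ[B ⊗[k] Bᵐᵒᵖ] K', ∀ x, i (g' x) = g x := by
    intro X _ _ g hg
    have h : ∀ x, ∃ y, i y = g x := fun x => by
      have : g x ∈ LinearMap.range i := by rw [hex']; exact hg x
      exact this
    choose g' hg' using h
    exact ⟨{ toFun := g'
             map_add' := fun x y => by apply hi; simp [hg']
             map_smul' := fun c x => by apply hi; simp [hg'] }, hg'⟩
  obtain ⟨u', hu'⟩ := liftN (U1 ∘ₗ i) (fun x => by simp [hU1, hpi])
  obtain ⟨v', hv'⟩ := liftK (V1 ∘ₗ j) (fun x => by simp [hV1, hfj])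
  obtain ⟨w, hw⟩ := liftN (U1 ∘ₗ V1 - LinearMap.id - β1 ∘ₗ α ∘ₗ f) (fun x => by
      simp [hU1, hV1, hβ1, h3])
  obtain ⟨θ', hθ', htr⟩ := trace_step b s t ht hs hb p hp i hi hex' θ h1 (v ∘ₗ u)
    (V1 ∘ₗ U1) (v' ∘ₗ u')
    (fun g => by simp [hU1, hV1]) (fun g => by simp [hu', hv']) r hr
  refine Good.mk b s r N (-c) θ' u' v' P hP j w hθ' (by rw [← h2, ← htr]) ?_
  intro x
  apply hj
  rw [hu', map_add, hw]
  simp [hv', hfj]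

set_option maxHeartbeats 2000000 in
theorem Good.step (ht : ∀ x y, t (x * y) = t (y * x)) (hs : ∀ i, s (s i) = i)
    (hb : ∀ y, ∑ j, t (b (s j) * y) • b j = y) {r : B} (hr : IsNilpotent r)
    {U P N : ModuleCat.{0} (B ⊗[k] Bᵐᵒᵖ)} {c : k} (h : Good b s r U c)
    (hP : Module.Projective (B ⊗[k] Bᵐᵒᵖ) P) (f : P →ₗ[B ⊗[k] Bᵐᵒᵖ] U)
    (hf : Function.Surjective f) (j : N →ₗ[B ⊗[k] Bᵐᵒᵖ] P) (hj : Function.Injective j)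
    (hex : LinearMap.range j = LinearMap.ker f) : Good b s r N (-c) := by
  obtain ⟨K, i1, i2, i3, i4, i5, θ, u, v, F, hF, α, β, h1, h2, h3⟩ := h
  have : Module.Finite (B ⊗[k] Bᵐᵒᵖ) K := Module.Finite.of_restrictScalars_finite k _ K
  obtain ⟨m, p, hp⟩ := Module.Finite.exists_fin' (B ⊗[k] Bᵐᵒᵖ) K
  have fdk : FiniteDimensional k (LinearMap.ker p) :=
    Module.Finite.of_injective ((LinearMap.ker p).subtype.restrictScalars k)
      (Submodule.injective_subtype _)
  exact Good.step_aux b s t ht hs hb hr hP f hf j hj hex θ u v F hF α β h1 h2 h3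
    (G := Fin m → B ⊗[k] Bᵐᵒᵖ) p hp (K' := LinearMap.ker p)
    (LinearMap.ker p).subtype (Submodule.injective_subtype _) (Submodule.range_subtype _)

theorem Good.chain (ht : ∀ x y, t (x * y) = t (y * x)) (hs : ∀ i, s (s i) = i)
    (hb : ∀ y, ∑ j, t (b (s j) * y) • b j = y) {r : B} (hr : IsNilpotent r)
    {n : ℕ} {M N : ModuleCat.{0} (B ⊗[k] Bᵐᵒᵖ)} {c : k} (h : Good b s r N c)
    (hc : Chain (B ⊗[k] Bᵐᵒᵖ) n M N) : Good b s r M ((-1) ^ n * c) := by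
  induction hc generalizing c with
  | base M N e => simpa using h.iso b s e.symm
  | step n M N P K hP f hf i hi hex hc ih =>
    have h1 := h.step b s t ht hs hb hr hP f hf i hi hex
    convert ih h1 using 1
    ring

end Trace2

end TrivExtPer
namespace TrivExtPer

section Trace3

set_option linter.style.haveILetI false

theorem tower_of (k R M : Type) [Field k] [Ring R] [Algebra k R] [AddCommGroup M] [Module k M]
    [Module R M] (h : ∀ (c : k) (m : M), algebraMap k R c • m = c • m) : IsScalarTower k R M :=
  ⟨fun c r m => by rw [Algebra.smul_def, mul_smul, h]⟩

variable {k B : Type} [Field k] [Ring B] [Algebra k B] [FiniteDimensional k B]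

variable {ι : Type} [Fintype ι] (b : ι → B) (s : ι ≃ ι) (t : B →ₗ[k] k)

/-- bimodule isomorphisms -/
noncomputable def mkEquiv {M N : ModuleCat.{0} (B ⊗[k] Bᵐᵒᵖ)} (e : M ≃+ N)
    (h : ∀ (x y : B) (m : M), e ((x ⊗ₜ[k] MulOpposite.op y : B ⊗[k] Bᵐᵒᵖ) • m) =
      (x ⊗ₜ[k] MulOpposite.op y : B ⊗[k] Bᵐᵒᵖ) • e m) : M ≃ₗ[B ⊗[k] Bᵐᵒᵖ] N :=
  { e with
    map_smul' := fun r m => by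
      show e (r • m) = r • e m
      induction r using TensorProduct.induction_on with
      | zero =>
        have h0 := h 0 0 m
        rwa [TensorProduct.zero_tmul] at h0
      | add x y hx hy => simp only [add_smul, map_add, hx, hy]
      | tmul x y => exact h x y.unop m }

/-- the rank one theta -/
noncomputable def theta0 {W : Type} [AddCommGroup W] [Module k W] (e : B ≃ₗ[k] W) : W →ₗ[k] W :=
  (t ∘ₗ e.symm.toLinearMap).smulRight (e 1)

section
variable {W : Type} [AddCommGroup W] [Module k W] [Module (B ⊗[k] Bᵐᵒᵖ) W]
    [IsScalarTower k (B ⊗[k] Bᵐᵒᵖ) W] (e : B ≃ₗ[k] W) (φ : B ≃ₐ[k] B)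
    (he : ∀ x y z, (x ⊗ₜ[k] MulOpposite.op y) • e z = e (x * z * φ y))

include he

omit [FiniteDimensional k B] in
theorem Cas_theta0 (hb : ∀ y, ∑ j, t (b (s j) * y) • b j = y) :
    Cas b s (theta0 t e) = LinearMap.id := by
  ext w
  obtain ⟨z, rfl⟩ := e.surjective w
  have he1 : ∀ x z, lf k x • e z = e (x * z) := fun x z => by
    have := he x 1 z
    rw [map_one, mul_one, MulOpposite.op_one] at this
    exact this
  rw [Cas_apply]
  have h2 : ∀ i, lf k (b i) • theta0 t e (lf k (b (s i)) • e z) =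
      t (b (s i) * z) • e (b i) := fun i => by
    rw [he1, theta0, LinearMap.smulRight_apply, smul_comm, he1, mul_one]
    simp
  simp only [h2, ← map_smul, ← map_sum, hb, LinearMap.id_apply]

theorem trace_theta0 (r : B) :
    LinearMap.trace k W (theta0 t e ∘ₗ op W (rt k r)) = t (φ r) := by
  have : FiniteDimensional k W := Module.Finite.equiv e
  have h : theta0 t e ∘ₗ op W (rt k r) =
      (t ∘ₗ e.symm.toLinearMap ∘ₗ op W (rt k r)).smulRight (e 1) := by
    ext w
    simp [theta0]
  rw [h, LinearMap.trace_smulRight]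
  have := he 1 r 1
  rw [one_mul, one_mul] at this
  simp [this]

theorem good_start (hb : ∀ y, ∑ j, t (b (s j) * y) • b j = y) (r : B) :
    Good b s r (ModuleCat.of (B ⊗[k] Bᵐᵒᵖ) W) (t (φ r)) := by
  have : FiniteDimensional k W := Module.Finite.equiv e
  refine Good.mk b s r _ _ (theta0 t e) (LinearMap.id : W →ₗ[B ⊗[k] Bᵐᵒᵖ] W) LinearMap.id
    (ModuleCat.of _ (B ⊗[k] Bᵐᵒᵖ)) inferInstance 0 0 (Cas_theta0 b s t e φ he hb) ?_ ?_
  · rw [← trace_theta0 t e φ he r]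
    rfl
  · intro x
    simp

theorem good_end (hs : ∀ i, s (s i) = i)
    (hb : ∀ y, ∑ j, t (b (s j) * y) • b j = y) (r : B) (hr : IsNilpotent r) (c : k)
    (h : Good b s r (ModuleCat.of (B ⊗[k] Bᵐᵒᵖ) W) c) : t (φ r) = c := by
  have : FiniteDimensional k W := Module.Finite.equiv e
  obtain ⟨K, i1, i2, i3, i4, i5, θ, u, v, F, hF, α, β, h1, h2, h3⟩ := h
  letI : Module k F := Module.compHom F (algebraMap k (B ⊗[k] Bᵐᵒᵖ))
  have : IsScalarTower k (B ⊗[k] Bᵐᵒᵖ) F := tower_of k (B ⊗[k] Bᵐᵒᵖ) F fun _ _ => rfl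
  change K →ₗ[B ⊗[k] Bᵐᵒᵖ] W at u
  change W →ₗ[B ⊗[k] Bᵐᵒᵖ] K at v
  change W →ₗ[B ⊗[k] Bᵐᵒᵖ] F at α
  change F →ₗ[B ⊗[k] Bᵐᵒᵖ] W at β
  obtain ⟨θF, hF1, hF2⟩ := exists_theta (M := F) b s t hb
  have hθ0 := Cas_theta0 b s t e φ he hb
  let uk := u.restrictScalars k
  let vk := v.restrictScalars k
  let αk := α.restrictScalars k
  let βk := β.restrictScalars k
  have A1 := trace_cyc b s hs (theta0 t e) hθ0 θ h1 uk (LL_of u) (vk ∘ₗ op W (rt k r))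
    ((LL_of v).comp (LL_rt r))
  have A2 := trace_cyc b s hs (theta0 t e) hθ0 θF hF1 βk (LL_of β) (αk ∘ₗ op W (rt k r))
    ((LL_of α).comp (LL_rt r))
  have A3 : LinearMap.trace k W (βk ∘ₗ θF ∘ₗ αk ∘ₗ op W (rt k r)) = 0 := by
    have := trace_zero r hr (βk ∘ₗ θF ∘ₗ αk) (fun m => by simp [βk, αk, hF2])
    exact this
  have A4 : LinearMap.trace k W (uk ∘ₗ θ ∘ₗ vk ∘ₗ op W (rt k r)) = c := by
    rw [LinearMap.trace_comp_comm', ← h2]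
    congr 1
    ext x
    simp [uk, vk]
  have A5 : theta0 t e ∘ₗ uk ∘ₗ vk ∘ₗ op W (rt k r) =
      theta0 t e ∘ₗ op W (rt k r) + theta0 t e ∘ₗ βk ∘ₗ αk ∘ₗ op W (rt k r) := by
    ext x
    simp only [LinearMap.comp_apply, LinearMap.add_apply, ← map_add]
    congr 1
    exact h3 _
  rw [A5, map_add, A2, A3, A4, trace_theta0 t e φ he r, add_zero] at A1
  exact A1

end

omit [FiniteDimensional k B] in
theorem reg_smul (x y z : B) : ((x ⊗ₜ[k] MulOpposite.op y : B ⊗[k] Bᵐᵒᵖ) •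
    (show regularBimodule k B from z) : regularBimodule k B) = (x * z * y : B) := by
  letI : Module (B ⊗[k] Bᵐᵒᵖ) B := TensorProduct.Algebra.module
  show (x ⊗ₜ[k] MulOpposite.op y : B ⊗[k] Bᵐᵒᵖ) • z = x * z * y
  rw [TensorProduct.Algebra.smul_def, op_smul_eq_mul, smul_eq_mul, mul_assoc]

omit [FiniteDimensional k B] in
theorem twb_smul (φ : B ≃ₐ[k] B) (x y z : B) : ((x ⊗ₜ[k] MulOpposite.op y : B ⊗[k] Bᵐᵒᵖ) •
    (show twistedBimodule k B φ from z) : twistedBimodule k B φ) = (x * z * φ y : B) :=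
  reg_smul x (φ y) z

/-- regular is untwisted -/
noncomputable def regEquiv : regularBimodule k B ≃ₗ[B ⊗[k] Bᵐᵒᵖ]
    twistedBimodule k B AlgEquiv.refl :=
  mkEquiv (AddEquiv.refl B : (regularBimodule k B) ≃+ (twistedBimodule k B AlgEquiv.refl))
    (fun x y z => (reg_smul x y z).trans (twb_smul AlgEquiv.refl x y z).symm)

theorem trace_main (ht : ∀ x y, t (x * y) = t (y * x)) (hs : ∀ i, s (s i) = i)
    (hb : ∀ y, ∑ j, t (b (s j) * y) • b j = y) {n : ℕ} {φ : B ≃ₐ[k] B}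
    (h : Chain (B ⊗[k] Bᵐᵒᵖ) n (twistedBimodule k B φ) (regularBimodule k B))
    (r : B) (hr : IsNilpotent r) : t (φ r) = (-1) ^ n * t r := by
  have key : ∀ (ψ : B ≃ₐ[k] B), ∃ (_ : Module k (twistedBimodule k B ψ))
      (_ : IsScalarTower k (B ⊗[k] Bᵐᵒᵖ) (twistedBimodule k B ψ)) 
      (e : B ≃ₗ[k] twistedBimodule k B ψ),
      ∀ x y z, (x ⊗ₜ[k] MulOpposite.op y : B ⊗[k] Bᵐᵒᵖ) • e z = e (x * z * ψ y) := by
    intro ψ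
    letI i1 : Module k (twistedBimodule k B ψ) := inferInstanceAs (Module k B)
    refine ⟨i1, ?_, ⟨⟨⟨fun x => x, fun _ _ => rfl⟩, fun _ _ => rfl⟩, fun x => x, fun _ => rfl,
      fun _ => rfl⟩, fun x y z => twb_smul ψ x y z⟩
    refine tower_of k (B ⊗[k] Bᵐᵒᵖ) (twistedBimodule k B ψ) fun c x => ?_
    have := twb_smul ψ (algebraMap k B c) 1 x
    rw [Algebra.TensorProduct.algebraMap_apply]
    refine this.trans ?_
    have h2 : ∀ z : B, algebraMap k B c * z * ψ 1 = c • z := fun z => by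
      rw [map_one, mul_one, ← Algebra.smul_def]
    exact h2 x
  obtain ⟨i1, i2, e, he⟩ := key φ
  obtain ⟨j1, j2, e', he'⟩ := key AlgEquiv.refl
  refine good_end b s t e φ he hs hb r hr _ ?_
  refine Good.chain b s t ht hs hb hr (N := twistedBimodule k B AlgEquiv.refl) ?_ ?_
  · exact good_start b s t e' AlgEquiv.refl he' hb r
  · refine h.congr_right ?_
    exact regEquiv

end Trace3

end TrivExtPer
namespace TrivExtPer

section Pow

variable {k B : Type} [Field k] [Ring B] [Algebra k B]

/-- twisting automorphism of the enveloping algebra -/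
noncomputable def sg (φ : B ≃ₐ[k] B) : (B ⊗[k] Bᵐᵒᵖ) ≃+* (B ⊗[k] Bᵐᵒᵖ) :=
  (Algebra.TensorProduct.congr (AlgEquiv.refl (R := k) (A₁ := B)) (AlgEquiv.op φ)).toRingEquiv

theorem sg_tmul (φ : B ≃ₐ[k] B) (x y : B) :
    sg φ (x ⊗ₜ[k] MulOpposite.op y) = x ⊗ₜ[k] MulOpposite.op (φ y) := rfl

theorem twtw_smul (φ : B ≃ₐ[k] B) (M : ModuleCat.{0} (B ⊗[k] Bᵐᵒᵖ)) (x y : B) (m : M) :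
    ((x ⊗ₜ[k] MulOpposite.op y : B ⊗[k] Bᵐᵒᵖ) • (show tw (sg φ) M from m) : tw (sg φ) M) =
      ((x ⊗ₜ[k] MulOpposite.op (φ y) : B ⊗[k] Bᵐᵒᵖ) • m : M) := rfl

/-- twisting a twisted bimodule -/
noncomputable def twtwEquiv (φ ψ : B ≃ₐ[k] B) :
    twistedBimodule k B (ψ * φ) ≃ₗ[B ⊗[k] Bᵐᵒᵖ] tw (sg φ) (twistedBimodule k B ψ) :=
  mkEquiv (AddEquiv.refl B :
      (twistedBimodule k B (ψ * φ)) ≃+ (tw (sg φ) (twistedBimodule k B ψ)))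
    (fun x y z => (twb_smul (ψ * φ) x y z).trans (twb_smul ψ x (φ y) z).symm)

/-- twisting the regular bimodule -/
noncomputable def twregEquiv (φ : B ≃ₐ[k] B) :
    tw (sg φ) (regularBimodule k B) ≃ₗ[B ⊗[k] Bᵐᵒᵖ] twistedBimodule k B φ :=
  mkEquiv (AddEquiv.refl B :
      (tw (sg φ) (regularBimodule k B)) ≃+ (twistedBimodule k B φ))
    (fun x y z => (reg_smul x (φ y) z).trans (twb_smul φ x y z).symm)

theorem chain_pow {n : ℕ} {φ : B ≃ₐ[k] B}
    (h : Chain (B ⊗[k] Bᵐᵒᵖ) n (twistedBimodule k B φ) (regularBimodule k B)) (m : ℕ) :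
    Chain (B ⊗[k] Bᵐᵒᵖ) (m * n) (twistedBimodule k B (φ ^ m)) (regularBimodule k B) := by
  induction m with
  | zero =>
    rw [zero_mul]
    refine .base _ _ ?_
    exact (regEquiv).symm
  | succ m ih =>
    have h1 := ((h.tw (sg (φ ^ m))).congr_right (twregEquiv (φ ^ m))).congr_left
      (twtwEquiv (φ ^ m) φ)
    rw [pow_succ', show (m + 1) * n = n + m * n by ring]
    exact ih.trans h1

/-- inner twists are trivial -/
noncomputable def innerEquiv (φ : B ≃ₐ[k] B) (u : Bˣ) (hu : ∀ y, (u : B) * φ y = y * u) :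
    regularBimodule k B ≃ₗ[B ⊗[k] Bᵐᵒᵖ] twistedBimodule k B φ :=
  mkEquiv (({ toFun := fun x => x * u
              invFun := fun x => x * (u⁻¹ : Bˣ)
              left_inv := fun x => by simp
              right_inv := fun x => by simp
              map_add' := fun x y => add_mul x y _ } : B ≃+ B) :
      (regularBimodule k B) ≃+ (twistedBimodule k B φ))
    (fun x y z => by
      have h2 := twb_smul φ x y ((show B from z) * u)
      have h1 := reg_smul (k := k) x y z
      refine Eq.trans ?_ h2.symm
      refine (congrArg (fun w : B => w * u) h1).trans ?_
      have : ∀ z : B, x * z * y * u = x * (z * u) * φ y := fun z => by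
        simp only [mul_assoc, hu]
      exact this z)

theorem periodic_of_pow {n m : ℕ} (hn : 1 ≤ n) (hm : 1 ≤ m) {φ : B ≃ₐ[k] B}
    (h : Chain (B ⊗[k] Bᵐᵒᵖ) n (twistedBimodule k B φ) (regularBimodule k B))
    (u : Bˣ) (hu : ∀ y, (u : B) * (φ ^ m) y = y * u) : IsPeriodicAlgebra k B :=
  ⟨m * n, Nat.mul_pos hm hn, seq_of_chain ((chain_pow h m).congr_left (innerEquiv _ u hu))⟩

theorem twisted_of_periodic (h : IsPeriodicAlgebra k B) : IsTwistedPeriodicAlgebra k B := by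
  obtain ⟨n, hn, h⟩ := h
  exact ⟨n, AlgEquiv.refl, hn, seq_of_chain ((chain_of_seq h).congr_left regEquiv.symm)⟩

end Pow

end TrivExtPer
namespace TrivExtPer

section Sym

variable {k A : Type} [Field k] [Ring A] [Algebra k A]

theorem dual_smul (a : A) (f : Module.Dual k A) (x : A) : (a • f) x = f (x * a) := rfl
theorem dual_op_smul (a : A) (f : Module.Dual k A) (x : A) :
    (MulOpposite.op a • f) x = f (a * x) := rfl

/-- symmetrizing form -/
noncomputable def tf : TrivialExtension k A →ₗ[k] k where
  toFun x := x.snd 1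
  map_add' x y := by simp
  map_smul' c x := by simp

theorem tf_mul (x y : TrivialExtension k A) : tf (x * y) = y.snd x.fst + x.snd y.fst := by
  show (x * y).snd 1 = _
  rw [TrivSqZeroExt.snd_mul, LinearMap.add_apply, dual_smul, dual_op_smul, one_mul, mul_one]

instance [FiniteDimensional k A] : FiniteDimensional k (TrivialExtension k A) :=
  inferInstanceAs (FiniteDimensional k (A × Module.Dual k A))

theorem trace_main' [FiniteDimensional k A] {n : ℕ}
    {φ : TrivialExtension k A ≃ₐ[k] TrivialExtension k A}
    (h : Chain (TrivialExtension k A ⊗[k] (TrivialExtension k A)ᵐᵒᵖ) n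
      (twistedBimodule k (TrivialExtension k A) φ) (regularBimodule k (TrivialExtension k A)))
    (r : TrivialExtension k A) (hr : IsNilpotent r) : tf (φ r) = (-1) ^ n * tf r := by
  let a := Module.finBasis k A
  let b : Fin (Module.finrank k A) ⊕ Fin (Module.finrank k A) → TrivialExtension k A :=
    Sum.elim (fun i => TrivSqZeroExt.inl (a i)) (fun i => TrivSqZeroExt.inr (a.coord i))
  refine trace_main b (Equiv.sumComm _ _) tf ?_ ?_ ?_ h r hr
  · intro x y
    rw [tf_mul, tf_mul, add_comm]
  · rintro (i | i) <;> rfl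
  · intro y
    rw [Fintype.sum_sum_type]
    simp only [b, Equiv.sumComm_apply, Sum.swap_inl, Sum.swap_inr, Sum.elim_inl, Sum.elim_inr,
      tf_mul, TrivSqZeroExt.fst_inl, TrivSqZeroExt.snd_inl, TrivSqZeroExt.fst_inr,
      TrivSqZeroExt.snd_inr, map_zero, LinearMap.zero_apply, zero_add, add_zero]
    refine TrivSqZeroExt.ext ?_ ?_
    · simp only [TrivSqZeroExt.fst_add, TrivSqZeroExt.fst_sum, TrivSqZeroExt.fst_smul,
        TrivSqZeroExt.fst_inl, TrivSqZeroExt.fst_inr, smul_zero, Finset.sum_const_zero, add_zero]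
      exact a.sum_repr y.fst
    · simp only [TrivSqZeroExt.snd_add, TrivSqZeroExt.snd_sum, TrivSqZeroExt.snd_smul,
        TrivSqZeroExt.snd_inl, TrivSqZeroExt.snd_inr, smul_zero, Finset.sum_const_zero, zero_add]
      refine a.ext fun i => ?_
      simp [LinearMap.sum_apply, Finsupp.single_apply]

end Sym

end TrivExtPer
namespace TrivExtPer

section Inc

set_option linter.unusedSectionVars false

variable {k P : Type} [Field k] [PartialOrder P] [LocallyFiniteOrder P] [Fintype P]
  [DecidableEq P]

theorem inc_mul_apply (f g : IncidenceAlgebra k P) (a b : P) :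
    (f * g) a b = ∑ x, f a x * g x b := by
  rw [IncidenceAlgebra.mul_apply]
  refine Finset.sum_subset (Finset.subset_univ _) fun x _ hx => ?_
  rw [Finset.mem_Icc, not_and_or] at hx
  rcases hx with hx | hx
  · rw [IncidenceAlgebra.apply_eq_zero_of_not_le hx, zero_mul]
  · rw [IncidenceAlgebra.apply_eq_zero_of_not_le hx, mul_zero]

open Classical in
/-- matrix units -/
noncomputable def E (k : Type) {P : Type} [Field k] [PartialOrder P] (x y : P) :
    IncidenceAlgebra k P where
  toFun a b := if (a = x ∧ b = y) ∧ x ≤ y then 1 else 0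
  eq_zero_of_not_le' a b h := if_neg (by rintro ⟨⟨rfl, rfl⟩, h'⟩; exact h h')

open Classical in
theorem E_apply (x y a b : P) : E k x y a b = if (a = x ∧ b = y) ∧ x ≤ y then 1 else 0 := by
  simp only [E, IncidenceAlgebra.coe_mk]
  congr

theorem E_zero {x y : P} (h : ¬ x ≤ y) : E k x y = 0 := by
  ext a b
  rw [E_apply, if_neg (fun h' => h h'.2)]
  rfl

open Classical in
theorem E_mul (x y : P) (g : IncidenceAlgebra k P) (a b : P) :
    (E k x y * g) a b = if a = x ∧ x ≤ y then g y b else 0 := by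
  rw [inc_mul_apply, Finset.sum_eq_single y]
  · rw [E_apply]
    by_cases h : a = x ∧ x ≤ y
    · rw [if_pos ⟨⟨h.1, rfl⟩, h.2⟩, if_pos h, one_mul]
    · rw [if_neg (fun h' => h ⟨h'.1.1, h'.2⟩), if_neg h, zero_mul]
  · intro z _ hz
    rw [E_apply, if_neg (fun h' => hz h'.1.2), zero_mul]
  · simp

open Classical in
theorem mul_E (x y : P) (g : IncidenceAlgebra k P) (a b : P) :
    (g * E k x y) a b = if b = y ∧ x ≤ y then g a x else 0 := by
  rw [inc_mul_apply, Finset.sum_eq_single x]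
  · rw [E_apply]
    by_cases h : b = y ∧ x ≤ y
    · rw [if_pos ⟨⟨rfl, h.1⟩, h.2⟩, if_pos h, mul_one]
    · rw [if_neg (fun h' => h ⟨h'.1.2, h'.2⟩), if_neg h, mul_zero]
  · intro z _ hz
    rw [E_apply, if_neg (fun h' => hz h'.1.1), mul_zero]
  · simp

theorem E_peirce (x y : P) (g : IncidenceAlgebra k P) :
    E k x x * g * E k y y = g x y • E k x y := by
  ext a b hab
  rw [mul_E, E_mul, IncidenceAlgebra.constSMul_apply, E_apply, smul_eq_mul]
  by_cases hb : b = y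
  · subst hb
    by_cases ha : a = x
    · subst ha; simp [hab]
    · simp [ha]
  · simp [hb]

theorem E_mul_E {x y z : P} (h : x ≤ y) (h' : y ≤ z) : E k x y * E k y z = E k x z := by
  ext a b hab
  rw [E_mul, E_apply, E_apply]
  simp [h, h', h.trans h', ite_and]

theorem E_orth {x y : P} (h : x ≠ y) : E k x x * E k y y = 0 := by
  ext a b hab
  rw [E_mul, E_apply]
  simp [h]

theorem inc_sum_apply {ι : Type} (s : Finset ι) (f : ι → IncidenceAlgebra k P) (a b : P) :
    (∑ i ∈ s, f i) a b = ∑ i ∈ s, f i a b := by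
  classical
  induction s using Finset.induction_on with
  | empty => rfl
  | insert i s hi ih => rw [Finset.sum_insert hi, Finset.sum_insert hi,
      IncidenceAlgebra.add_apply, ih]

theorem E_sum : ∑ x : P, E k x x = 1 := by
  ext a b hab
  rw [inc_sum_apply, IncidenceAlgebra.one_apply, Finset.sum_eq_single a]
  · rw [E_apply]; simp [eq_comm]
  · intro z _ hz; rw [E_apply]; simp [hz.symm]
  · simp

/-- evaluation -/
noncomputable def ev (k : Type) {P : Type} [Field k] [PartialOrder P] [LocallyFiniteOrder P]
    [DecidableEq P] (x y : P) : Module.Dual k (IncidenceAlgebra k P) where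
  toFun g := g x y
  map_add' _ _ := rfl
  map_smul' _ _ := rfl

theorem ev_apply (x y : P) (g : IncidenceAlgebra k P) : ev k x y g = g x y := rfl

instance : FiniteDimensional k (IncidenceAlgebra k P) := by
  let f : IncidenceAlgebra k P →ₗ[k] (P → P → k) :=
    { toFun := fun g a b => g a b
      map_add' := fun _ _ => rfl
      map_smul' := fun _ _ => rfl }
  exact FiniteDimensional.of_injective f (fun x y h => DFunLike.coe_injective h)

theorem inc_isUnit (a : IncidenceAlgebra k P) (ha : ∀ x, a x x ≠ 0) : IsUnit a := by
  have hinj : Function.Injective (LinearMap.mulLeft k a) := by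
    rw [← LinearMap.ker_eq_bot, LinearMap.ker_eq_bot']
    intro g hg
    have hg' : a * g = 0 := hg
    have key : ∀ y x, g x y = 0 := by
      intro y x
      induction x using WellFoundedGT.induction with
      | ind x ih =>
        have h1 : (a * g) x y = 0 := by rw [hg']; rfl
        rw [inc_mul_apply, Finset.sum_eq_single x] at h1
        · exact (mul_eq_zero.1 h1).resolve_left (ha x)
        · intro z _ hz
          by_cases hxz : x ≤ z
          · rw [ih z (lt_of_le_of_ne hxz hz.symm), mul_zero]
          · rw [IncidenceAlgebra.apply_eq_zero_of_not_le hxz, zero_mul]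
        · simp
    ext x y _
    exact key y x
  obtain ⟨b, hb⟩ := (LinearMap.injective_iff_surjective.1 hinj) 1
  have hb' : a * b = 1 := hb
  have hb2 : b * a = 1 := by
    apply hinj
    show a * (b * a) = a * 1
    rw [← mul_assoc, hb', one_mul, mul_one]
  exact ⟨⟨a, b, hb', hb2⟩, rfl⟩

/-- the trivial extension of the incidence algebra -/
noncomputable abbrev TI (k P : Type) [Field k] [PartialOrder P] [LocallyFiniteOrder P]
    [DecidableEq P] : Type := TrivialExtension k (IncidenceAlgebra k P)

theorem ti_isUnit (b : TI k P) (hb : ∀ x, b.fst x x ≠ 0) : IsUnit b :=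
  TrivSqZeroExt.isUnit_iff_isUnit_fst.2 (inc_isUnit b.fst hb)

/-- matrix units in the trivial extension -/
noncomputable def EE (k : Type) {P : Type} [Field k] [PartialOrder P] [LocallyFiniteOrder P]
    [DecidableEq P] (x y : P) : TI k P := TrivSqZeroExt.inl (E k x y)
/-- dual matrix units in the trivial extension -/
noncomputable def FF (k : Type) {P : Type} [Field k] [PartialOrder P] [LocallyFiniteOrder P]
    [DecidableEq P] (x y : P) : TI k P := TrivSqZeroExt.inr (ev k y x)

theorem EE_fst (x y : P) : (EE k x y).fst = E k x y := rfl
theorem EE_snd (x y : P) : (EE k x y).snd = 0 := rfl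
theorem FF_fst (x y : P) : (FF k x y).fst = 0 := rfl
theorem FF_snd (x y : P) : (FF k x y).snd = ev k y x := rfl

theorem ti_peirce (x y : P) (b : TI k P) :
    EE k x x * b * EE k y y = b.fst x y • EE k x y + b.snd (E k y x) • FF k x y := by
  refine TrivSqZeroExt.ext ?_ ?_
  · rw [TrivSqZeroExt.fst_mul, TrivSqZeroExt.fst_mul, TrivSqZeroExt.fst_add,
      TrivSqZeroExt.fst_smul, TrivSqZeroExt.fst_smul, EE_fst, EE_fst, EE_fst, FF_fst, E_peirce,
      smul_zero, add_zero]
  · rw [TrivSqZeroExt.snd_mul, TrivSqZeroExt.snd_mul, TrivSqZeroExt.snd_add,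
      TrivSqZeroExt.snd_smul, TrivSqZeroExt.snd_smul, EE_snd, EE_snd, EE_snd, FF_snd,
      smul_zero, smul_zero, smul_zero, zero_add, add_zero, zero_add, EE_fst, EE_fst]
    refine LinearMap.ext fun g => ?_
    rw [dual_op_smul, dual_smul, E_peirce, map_smul, LinearMap.smul_apply, ev_apply,
      smul_eq_mul, smul_eq_mul, mul_comm]

theorem EE_mul_EE {x y z : P} (h : x ≤ y) (h' : y ≤ z) : EE k x y * EE k y z = EE k x z := by
  rw [EE, EE, ← TrivSqZeroExt.inl_mul, E_mul_E h h', EE]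

theorem EE_orth {x y : P} (h : x ≠ y) : EE k x x * EE k y y = 0 := by
  rw [EE, EE, ← TrivSqZeroExt.inl_mul, E_orth h, TrivSqZeroExt.inl_zero]

theorem EE_idem (x : P) : EE k x x * EE k x x = EE k x x := EE_mul_EE le_rfl le_rfl

theorem EE_zero {x y : P} (h : ¬ x ≤ y) : EE k x y = 0 := by
  rw [EE, E_zero h, TrivSqZeroExt.inl_zero]

theorem EE_sum : ∑ x : P, EE k x x = 1 := by
  have h := congrArg (TrivSqZeroExt.inlHom (IncidenceAlgebra k P)
    (Module.Dual k (IncidenceAlgebra k P))) (E_sum (k := k) (P := P))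
  rw [map_sum, map_one] at h
  exact h

theorem EE_FF {x y : P} (h : x ≤ y) : EE k x y * FF k y x = FF k x x := by
  rw [EE, FF, TrivSqZeroExt.inl_mul_inr, FF]
  congr 1
  refine LinearMap.ext fun g => ?_
  rw [dual_smul, ev_apply, ev_apply, mul_E]
  simp [h]

theorem FF_sq (x y z w : P) : FF k x y * FF k z w = 0 := by
  rw [FF, FF, TrivSqZeroExt.inr_mul_inr]

theorem FF_peirce (x y : P) : EE k x x * FF k x y * EE k y y = FF k x y := by
  rw [ti_peirce, FF_fst, FF_snd, ev_apply]
  by_cases h : y ≤ x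
  · rw [E_apply, if_pos ⟨⟨rfl, rfl⟩, h⟩, IncidenceAlgebra.zero_apply, zero_smul, zero_add, one_smul]
  · have : FF k x y = 0 := by
      rw [FF, show ev k y x = 0 from LinearMap.ext fun g =>
        IncidenceAlgebra.apply_eq_zero_of_not_le h g, TrivSqZeroExt.inr_zero]
    rw [this, IncidenceAlgebra.zero_apply, zero_smul, smul_zero, add_zero]

theorem EE_peirce (x y : P) : EE k x x * EE k x y * EE k y y = EE k x y := by
  by_cases h : x ≤ y
  · rw [EE_mul_EE le_rfl h, EE_mul_EE h le_rfl]
  · rw [EE_zero h, mul_zero, zero_mul]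

theorem ti_decomp (b : TI k P) :
    b = ∑ x, ∑ y, (b.fst x y • EE k x y + b.snd (E k y x) • FF k x y) := by
  simp only [← ti_peirce, ← Finset.mul_sum, ← Finset.sum_mul, EE_sum, mul_one, one_mul]

/-- diagonal characters -/
noncomputable def chi (x : P) : TI k P →ₐ[k] k :=
  AlgHom.ofLinearMap
    { toFun := fun b => b.fst x x
      map_add' := fun _ _ => rfl
      map_smul' := fun _ _ => rfl }
    (by show (1 : IncidenceAlgebra k P) x x = 1; simp)
    (fun a b => by
      show (a.fst * b.fst) x x = a.fst x x * b.fst x x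
      rw [IncidenceAlgebra.mul_apply]; simp)

theorem chi_apply (x : P) (b : TI k P) : chi x b = b.fst x x := rfl

theorem chi_surj (ψ : TI k P →ₐ[k] k) : ∃ x, chi x = ψ := by
  have h1 : ∑ x, ψ (EE k x x) ≠ 0 := by
    rw [← map_sum, EE_sum, map_one]; exact one_ne_zero
  obtain ⟨x, -, hx⟩ := Finset.exists_ne_zero_of_sum_ne_zero h1
  have hx1 : ψ (EE k x x) = 1 := by
    have := congrArg ψ (EE_idem (k := k) x)
    rw [map_mul] at this
    exact mul_left_cancel₀ hx (by rw [this, mul_one])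
  have hf : ψ (FF k x x) = 0 := by
    have := congrArg ψ (FF_sq (k := k) x x x x)
    rw [map_mul, map_zero] at this
    exact mul_self_eq_zero.1 this
  refine ⟨x, AlgHom.ext fun b => ?_⟩
  have := congrArg ψ (ti_peirce x x b)
  rw [map_mul, map_mul, map_add, map_smul, map_smul, hx1, hf, one_mul, mul_one, smul_zero,
    add_zero, smul_eq_mul, mul_one] at this
  rw [this, chi_apply]

theorem exists_pow (φ : TI k P ≃ₐ[k] TI k P) :
    ∃ m, 1 ≤ m ∧ ∀ x b, ((φ ^ m) b).fst x x = b.fst x x := by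
  have : Finite (TI k P →ₐ[k] k) := Finite.of_surjective (chi (k := k) (P := P)) chi_surj
  let π : Equiv.Perm (TI k P →ₐ[k] k) :=
    { toFun := fun ψ => ψ.comp φ.toAlgHom
      invFun := fun ψ => ψ.comp φ.symm.toAlgHom
      left_inv := fun ψ => AlgHom.ext fun b => by simp
      right_inv := fun ψ => AlgHom.ext fun b => by simp }
  have hpow : ∀ m ψ b, (π ^ m) ψ b = ψ ((φ ^ m) b) := by
    intro m
    induction m with
    | zero => intro ψ b; rfl
    | succ m ih =>
      intro ψ b
      rw [pow_succ', Equiv.Perm.mul_apply, pow_succ]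
      exact ih ψ (φ b)
  refine ⟨orderOf π, orderOf_pos π, fun x b => ?_⟩
  have := hpow (orderOf π) (chi x) b
  rw [pow_orderOf_eq_one] at this
  exact this.symm

end Inc

end TrivExtPer
namespace TrivExtPer

section Inner

set_option linter.unusedSectionVars false

variable {k P : Type} [Field k] [PartialOrder P] [LocallyFiniteOrder P] [Fintype P]
  [DecidableEq P]

theorem tf_comm (x y : TI k P) : tf (x * y) = tf (y * x) := by
  rw [tf_mul, tf_mul, add_comm]

theorem E_self {x y : P} (h : x ≤ y) : E k x y x y = 1 := by
  rw [E_apply, if_pos ⟨⟨rfl, rfl⟩, h⟩]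

theorem diag_inner (x0 : P) (hx0 : ∀ y : P, x0 ≤ y ∨ y ≤ x0) (ψ : TI k P →ₐ[k] TI k P)
    (he : ∀ x, ψ (EE k x x) = EE k x x) (ht : ∀ r, IsNilpotent r → tf (ψ r) = tf r) :
    ∃ w : (TI k P)ˣ, ∀ b, (w : TI k P) * ψ b = b * w := by
  have hpE : ∀ x y, ψ (EE k x y) = EE k x x * ψ (EE k x y) * EE k y y := by
    intro x y
    conv_lhs => rw [← EE_peirce x y, map_mul, map_mul, he, he]
  have hpF : ∀ x y, ψ (FF k x y) = EE k x x * ψ (FF k x y) * EE k y y := by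
    intro x y
    conv_lhs => rw [← FF_peirce x y, map_mul, map_mul, he, he]
  let c : P → P → k := fun x y => (ψ (EE k x y)).fst x y
  have hcxx : ∀ x, c x x = 1 := fun x => by
    show (ψ (EE k x x)).fst x x = 1
    rw [he, EE_fst, E_self le_rfl]
  have hE : ∀ x y, x ≤ y → ψ (EE k x y) = c x y • EE k x y := by
    intro x y h
    by_cases hxy : x = y
    · subst hxy; rw [hcxx, one_smul, he]
    · have hn : ¬ y ≤ x := fun h' => hxy (le_antisymm h h')
      rw [hpE, ti_peirce, E_zero hn, map_zero, zero_smul, add_zero]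
  have hFxx : ∀ x, ψ (FF k x x) = FF k x x := by
    intro x
    have h1 := hpF x x
    rw [ti_peirce] at h1
    set α := (ψ (FF k x x)).fst x x with hα
    set β := (ψ (FF k x x)).snd (E k x x)
    have hα0 : α = 0 := by
      have h2 : chi x (ψ (FF k x x)) * chi x (ψ (FF k x x)) = 0 := by
        rw [← map_mul, ← map_mul, FF_sq, map_zero, map_zero]
      exact mul_self_eq_zero.1 h2
    rw [hα0, zero_smul, zero_add] at h1
    have h3 : tf (ψ (FF k x x)) = tf (FF k x x) :=
      ht _ ⟨2, by rw [pow_two, FF_sq]⟩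
    have h4 : tf (FF k x x) = 1 := by
      show (1 : IncidenceAlgebra k P) x x = 1
      simp
    rw [h1, map_smul, h4, smul_eq_mul, mul_one] at h3
    rw [h1, h3, one_smul]
  have hFF : ∀ x y, x ≤ y → ∃ d : k, ψ (FF k y x) = d • FF k y x := by
    intro x y h
    by_cases hxy : x = y
    · subst hxy; exact ⟨1, by rw [one_smul, hFxx]⟩
    · have hn : ¬ y ≤ x := fun h' => hxy (le_antisymm h h')
      refine ⟨(ψ (FF k y x)).snd (E k x y), ?_⟩
      conv_lhs => rw [hpF, ti_peirce, EE_zero hn, smul_zero, zero_add]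
  have hcd : ∀ x y, x ≤ y → ∀ d, ψ (FF k y x) = d • FF k y x → c x y * d = 1 := by
    intro x y h d hd
    have h1 := congrArg ψ (EE_FF (k := k) h)
    rw [map_mul, hE x y h, hd, hFxx, smul_mul_smul_comm, EE_FF h] at h1
    have h2 := congrArg (fun b : TI k P => tf b) h1
    simp only [map_smul] at h2
    have h4 : tf (FF k x x) = 1 := by
      show (1 : IncidenceAlgebra k P) x x = 1
      simp
    rwa [h4, smul_eq_mul, mul_one] at h2
  have hc0 : ∀ x y, x ≤ y → c x y ≠ 0 := by
    intro x y h h0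
    obtain ⟨d, hd⟩ := hFF x y h
    have := hcd x y h d hd
    rw [h0, zero_mul] at this
    exact zero_ne_one this
  have hF : ∀ x y, x ≤ y → ψ (FF k y x) = (c x y)⁻¹ • FF k y x := by
    intro x y h
    obtain ⟨d, hd⟩ := hFF x y h
    rw [hd, eq_inv_of_mul_eq_one_right (hcd x y h d hd)]
  have hcm : ∀ x y z, x ≤ y → y ≤ z → c x z = c x y * c y z := by
    intro x y z h h'
    have h1 := congrArg ψ (EE_mul_EE (k := k) h h')
    rw [map_mul, hE x y h, hE y z h', hE x z (h.trans h'), smul_mul_smul_comm,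
      EE_mul_EE h h'] at h1
    have h2 := congrArg (fun b : TI k P => b.fst x z) h1
    simp only [TrivSqZeroExt.fst_smul, IncidenceAlgebra.constSMul_apply, EE_fst,
      E_self (h.trans h'), smul_eq_mul, mul_one] at h2
    exact h2.symm
  classical
  let g : P → k := fun y => if x0 ≤ y then c x0 y else (c y x0)⁻¹
  have hg0 : ∀ y, g y ≠ 0 := by
    intro y
    simp only [g]
    split_ifs with h
    · exact hc0 _ _ h
    · exact inv_ne_zero (hc0 _ _ ((hx0 y).resolve_left h))
  have hg : ∀ x y, x ≤ y → g x * c x y = g y := by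
    intro x y h
    simp only [g]
    by_cases h1 : x0 ≤ x
    · rw [if_pos h1, if_pos (h1.trans h), hcm x0 x y h1 h]
    · have h1' := (hx0 x).resolve_left h1
      rw [if_neg h1]
      by_cases h2 : x0 ≤ y
      · rw [if_pos h2, hcm x x0 y h1' h2, inv_mul_cancel_left₀ (hc0 _ _ h1')]
      · have h2' := (hx0 y).resolve_left h2
        rw [if_neg h2, hcm x y x0 h h2', mul_inv_rev, mul_assoc, inv_mul_cancel₀ (hc0 _ _ h),
          mul_one]
  let w : TI k P := ∑ x, g x • EE k x x
  have hwl : ∀ x b, w * (EE k x x * b) = g x • (EE k x x * b) := by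
    intro x b
    rw [← mul_assoc, Finset.sum_mul, Finset.sum_eq_single x]
    · rw [smul_mul_assoc, EE_idem, smul_mul_assoc]
    · intro z _ hz
      rw [smul_mul_assoc, EE_orth hz, smul_zero]
    · simp
  have hwr : ∀ x b, (b * EE k x x) * w = g x • (b * EE k x x) := by
    intro x b
    rw [mul_assoc, Finset.mul_sum, Finset.sum_eq_single x]
    · rw [mul_smul_comm, EE_idem, mul_smul_comm]
    · intro z _ hz
      rw [mul_smul_comm, EE_orth hz.symm, smul_zero]
    · simp
  have hwE : ∀ x y, w * EE k x y = g x • EE k x y := by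
    intro x y
    rw [← EE_peirce x y, mul_assoc, hwl]
  have hEw : ∀ x y, EE k x y * w = g y • EE k x y := by
    intro x y
    rw [← EE_peirce x y, hwr]
  have hwF : ∀ x y, w * FF k x y = g x • FF k x y := by
    intro x y
    rw [← FF_peirce x y, mul_assoc, hwl]
  have hFw : ∀ x y, FF k x y * w = g y • FF k x y := by
    intro x y
    rw [← FF_peirce x y, hwr]
  have hu : IsUnit w := by
    refine ti_isUnit w fun x => ?_
    have h1 := congrArg (fun b : TI k P => b.fst x x) (hwE x x)
    have h2 : chi x (w * EE k x x) = chi x (g x • EE k x x) := h1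
    have h3 : chi x (EE k x x) = (1 : k) := E_self le_rfl
    rw [map_mul, map_smul, h3, mul_one, smul_eq_mul, mul_one, chi_apply] at h2
    rw [h2]
    exact hg0 x
  obtain ⟨u, hu⟩ := hu
  refine ⟨u, fun b => ?_⟩
  rw [hu, ti_decomp b]
  simp only [map_sum, map_add, map_smul, Finset.mul_sum, Finset.sum_mul, mul_add, add_mul,
    mul_smul_comm, smul_mul_assoc]
  refine Finset.sum_congr rfl fun x _ => Finset.sum_congr rfl fun y _ => ?_
  congr 1
  · by_cases h : x ≤ y
    · rw [hE x y h, mul_smul_comm, hwE, hEw, smul_smul (c x y), mul_comm (c x y), hg x y h]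
    · rw [EE_zero h, map_zero, mul_zero, zero_mul]
  · by_cases h : y ≤ x
    · rw [hF y x h, mul_smul_comm, hwF, hFw, smul_smul (c y x)⁻¹, ← hg y x h,
        mul_comm (g y), inv_mul_cancel_left₀ (hc0 _ _ h)]
    · rw [E_zero h, map_zero, zero_smul, zero_smul]

theorem inner_of (x0 : P) (hx0 : ∀ y : P, x0 ≤ y ∨ y ≤ x0) (ψ : TI k P ≃ₐ[k] TI k P)
    (hd : ∀ x b, (ψ b).fst x x = b.fst x x) (ht : ∀ r, IsNilpotent r → tf (ψ r) = tf r) :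
    ∃ w : (TI k P)ˣ, ∀ b, (w : TI k P) * ψ b = b * w := by
  let v : TI k P := ∑ x, ψ (EE k x x) * EE k x x
  have h1 : ∀ x, v * EE k x x = ψ (EE k x x) * EE k x x := by
    intro x
    rw [Finset.sum_mul, Finset.sum_eq_single x]
    · rw [mul_assoc, EE_idem]
    · intro z _ hz
      rw [mul_assoc, EE_orth hz, mul_zero]
    · simp
  have h2 : ∀ x, ψ (EE k x x) * v = ψ (EE k x x) * EE k x x := by
    intro x
    rw [Finset.mul_sum, Finset.sum_eq_single x]
    · rw [← mul_assoc, ← map_mul, EE_idem]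
    · intro z _ hz
      rw [← mul_assoc, ← map_mul, EE_orth hz.symm, map_zero, zero_mul]
    · simp
  have hv : IsUnit v := by
    refine ti_isUnit v fun x => ?_
    have h3 := congrArg (chi x) (h1 x)
    have h4 : chi x (EE k x x) = (1 : k) := E_self le_rfl
    have h5 : chi x (ψ (EE k x x)) = (1 : k) := (hd x _).trans h4
    rw [map_mul, map_mul, h4, h5, mul_one, mul_one, chi_apply] at h3
    rw [h3]
    exact one_ne_zero
  obtain ⟨u, hu⟩ := hv
  let ψ' : TI k P →ₐ[k] TI k P :=
    AlgHom.ofLinearMap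
      ((LinearMap.mulLeft k ((u⁻¹ : (TI k P)ˣ) : TI k P)) ∘ₗ (LinearMap.mulRight k (u : TI k P))
        ∘ₗ ψ.toLinearMap)
      (by simp)
      (fun a b => by simp [mul_assoc])
  have hψ' : ∀ b, ψ' b = ((u⁻¹ : (TI k P)ˣ) : TI k P) * (ψ b * u) := fun b => rfl
  obtain ⟨w, hw⟩ := diag_inner x0 hx0 ψ' (fun x => by
      rw [hψ', hu, h2, ← h1, ← hu, Units.inv_mul_cancel_left])
    (fun r hr => by
      rw [hψ', tf_comm, mul_assoc, Units.mul_inv, mul_one, ht r hr])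
  refine ⟨w * u⁻¹, fun b => ?_⟩
  have h3 := hw b
  rw [hψ'] at h3
  rw [Units.val_mul, ← mul_assoc b, ← h3]
  simp only [mul_assoc, Units.mul_inv, mul_one]

theorem backward (x0 : P) (hx0 : ∀ y : P, x0 ≤ y ∨ y ≤ x0)
    (h : IsTwistedPeriodicAlgebra k (TI k P)) : IsPeriodicAlgebra k (TI k P) := by
  obtain ⟨n, φ, hn, h⟩ := h
  have hc := chain_of_seq h
  obtain ⟨m, hm, hd⟩ := exists_pow φ
  have hc2 := chain_pow hc (m * 2)
  obtain ⟨w, hw⟩ := inner_of x0 hx0 (φ ^ (m * 2)) (fun x b => by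
      rw [pow_mul, pow_two, AlgEquiv.mul_apply, hd, hd])
    (fun r hr => by
      rw [trace_main' hc2 r hr, show m * 2 * n = 2 * (m * n) by ring, pow_mul]
      simp)
  exact periodic_of_pow hn (by omega) hc w hw

end Inner

end TrivExtPer

/-- Let `P` be a finite poset containing an element comparable with every
other element, and let `k[P]` be its incidence algebra over the field `k`. Then the trivial
extension algebra `T(k[P])` is periodic if and only if it is twisted periodic. -/
theorem trivialExtension_incidenceAlgebra_periodic_iff_twistedPeriodic
    (k P : Type) [Field k] [PartialOrder P] [LocallyFiniteOrder P] [Fintype P] [DecidableEq P]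
    (hx : ∃ x : P, ∀ y : P, x ≤ y ∨ y ≤ x) :
    IsPeriodicAlgebra k (TrivialExtension k (IncidenceAlgebra k P)) ↔
      IsTwistedPeriodicAlgebra k (TrivialExtension k (IncidenceAlgebra k P)) := by
  obtain ⟨x0, hx0⟩ := hx
  exact ⟨TrivExtPer.twisted_of_periodic, TrivExtPer.backward x0 hx0⟩
end

section
/- Let A be a finite-dimensional algebra over a field k and let n be a positive integer. Then there are only finitely many isomorphism classes of A-modules X satisfying dim_k X = n and Ext¹_A(X, X) = 0; that is, there exist finitely many A-modules X_1, …, X_t such that every A-module X with dim_k X = n and Ext¹_A(X,X) = 0 is isomorphic to some X_i. -/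
/-- The `A`-module `X` is `n`-dimensional over the base field `k` (via restriction of
scalars along `algebraMap k A`). -/
def IsKDimEq (k A : Type) [Field k] [Ring A] [Algebra k A]
    (X : Type) [AddCommGroup X] [Module A X] (n : ℕ) : Prop :=
  letI : Module k X := Module.compHom X (algebraMap k A)
  Module.Finite k X ∧ Module.finrank k X = n

/-- `Ext¹_A(X, X) = 0`, phrased equivalently as: every short exact sequence
`0 → X → E → X → 0` of `A`-modules splits. -/
def SelfExtOneVanishes (A : Type) [Ring A] (X : Type) [AddCommGroup X] [Module A X] : Prop :=
  ∀ (E : Type) [AddCommGroup E] [Module A E] (f : X →ₗ[A] E) (g : E →ₗ[A] X),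
    Function.Injective f → Function.Surjective g → LinearMap.range f = LinearMap.ker g →
    ∃ s : X →ₗ[A] E, g ∘ₗ s = LinearMap.id

namespace RigidFin

section VP

variable {k P : Type} [Field k] (F : Subalgebra k (P → k))

/-- A vector-valued function all of whose coordinates lie in `F`. -/
def VP {V : Type} [AddCommGroup V] [Module k V] (g : P → V) : Prop :=
  ∀ w : V →ₗ[k] k, (fun y => w (g y)) ∈ F

variable {F}
variable {V W U : Type} [AddCommGroup V] [Module k V] [AddCommGroup W] [Module k W]
  [AddCommGroup U] [Module k U]

theorem VP.const (v : V) : VP F (fun _ : P => v) := fun w => F.algebraMap_mem (w v)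

theorem VP.add {g h : P → V} (hg : VP F g) (hh : VP F h) : VP F (fun y => g y + h y) := by
  intro w
  have := F.add_mem (hg w) (hh w)
  convert this using 1
  funext y; simp

theorem VP.sub {g h : P → V} (hg : VP F g) (hh : VP F h) : VP F (fun y => g y - h y) := by
  intro w
  have := F.sub_mem (hg w) (hh w)
  convert this using 1
  funext y; simp

theorem VP.sum {ι : Type} (s : Finset ι) {g : ι → P → V} (hg : ∀ i, VP F (g i)) :
    VP F (fun y => ∑ i ∈ s, g i y) := by
  intro w
  have := F.sum_mem (t := s) (fun i _ => hg i w)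
  convert this using 1
  funext y; simp

theorem VP.smul {c : P → k} {g : P → V} (hc : c ∈ F) (hg : VP F g) :
    VP F (fun y => c y • g y) := by
  intro w
  have := F.mul_mem hc (hg w)
  convert this using 1
  funext y; simp

theorem VP.map {g : P → V} (hg : VP F g) (L : V →ₗ[k] W) : VP F (fun y => L (g y)) :=
  fun w => hg (w ∘ₗ L)

theorem VP.bilin [FiniteDimensional k V] {g : P → V} {h : P → W} (hg : VP F g) (hh : VP F h)
    (B : V →ₗ[k] W →ₗ[k] U) : VP F (fun y => B (g y) (h y)) := by
  let b := Module.finBasis k V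
  have : (fun y => B (g y) (h y)) = fun y => ∑ i, (b.coord i (g y)) • B (b i) (h y) := by
    funext y
    conv_lhs => rw [← b.sum_repr (g y)]
    simp only [map_sum, map_smul, LinearMap.sum_apply, LinearMap.smul_apply, Module.Basis.coord_apply]
  rw [this]
  exact VP.sum _ fun i => VP.smul (hg _) (hh.map _)

theorem VP.of_apply [FiniteDimensional k V] {L : P → V →ₗ[k] W}
    (h : ∀ v, VP F (fun y => L y v)) : VP F L := by
  let b := Module.finBasis k V
  have : L = fun y => ∑ i, LinearMap.toSpanSingleton k W (L y (b i)) ∘ₗ (b.coord i) := by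
    funext y
    apply b.ext
    intro j
    simp [Finsupp.single_apply]
  rw [this]
  refine VP.sum _ fun i => ?_
  exact (h (b i)).map
    ((LinearMap.lcomp k W (b.coord i)) ∘ₗ (LinearMap.ringLmapEquivSelf k k W).symm.toLinearMap)

theorem VP.comp [FiniteDimensional k V] [FiniteDimensional k W] [FiniteDimensional k U] {L : P → V →ₗ[k] W}
    {M : P → W →ₗ[k] U} (hL : VP F L) (hM : VP F M) : VP F (fun y => M y ∘ₗ L y) :=
  hM.bilin hL (LinearMap.llcomp k V W U)

theorem VP.app [FiniteDimensional k V] [FiniteDimensional k W] {L : P → V →ₗ[k] W}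
    {g : P → V} (hL : VP F L) (hg : VP F g) : VP F (fun y => L y (g y)) :=
  hL.bilin hg LinearMap.id

theorem VP.pow [FiniteDimensional k V] {L : P → Module.End k V} (hL : VP F L) (m : ℕ) :
    VP F (fun y => L y ^ m) := by
  induction m with
  | zero => simpa using VP.const 1
  | succ m ih =>
    simp only [pow_succ]
    exact VP.comp hL ih

/-- evaluation at a point -/
def ev (F : Subalgebra k (P → k)) (y : P) : F →+* k :=
  (Pi.evalRingHom (fun _ => k) y).comp F.val.toRingHom

theorem VP.lift [FiniteDimensional k V] {L : P → Module.End k V} (hL : VP F L) :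
    ∃ M : Matrix (Module.Free.ChooseBasisIndex k V) (Module.Free.ChooseBasisIndex k V) F,
      ∀ y, M.map (ev F y) = LinearMap.toMatrix (Module.Free.chooseBasis k V)
        (Module.Free.chooseBasis k V) (L y) := by
  let b := Module.Free.chooseBasis k V
  refine ⟨fun i j => ⟨fun y => b.coord i (L y (b j)), ?_⟩, ?_⟩
  · exact (hL.map (LinearMap.applyₗ (b j))) (b.coord i)
  · intro y
    ext i j
    rw [LinearMap.toMatrix_apply]
    rfl

theorem VP.charpoly [FiniteDimensional k V] {L : P → Module.End k V} (hL : VP F L) (m : ℕ) :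
    (fun y => (L y).charpoly.coeff m) ∈ F := by
  obtain ⟨M, hM⟩ := hL.lift
  have : (fun y => (L y).charpoly.coeff m) = (M.charpoly.coeff m : F) := by
    funext y
    rw [LinearMap.charpoly, ← hM, Matrix.charpoly_map, Polynomial.coeff_map]
    rfl
  rw [this]
  exact (M.charpoly.coeff m).2

theorem VP.det [FiniteDimensional k V] {L : P → Module.End k V} (hL : VP F L) :
    (fun y => LinearMap.det (L y)) ∈ F := by
  obtain ⟨M, hM⟩ := hL.lift
  have : (fun y => LinearMap.det (L y)) = (M.det : F) := by
    funext y
    rw [← LinearMap.det_toMatrix (Module.Free.chooseBasis k V), ← hM]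
    exact ((ev F y).map_det M).symm
  rw [this]
  exact M.det.2

theorem VP.aeval_charpoly [FiniteDimensional k V] [FiniteDimensional k W]
    {L : P → Module.End k V} {M : P → Module.End k W} (hL : VP F L) (hM : VP F M) :
    VP F (fun y => Polynomial.aeval (M y) (L y).charpoly) := by
  have : (fun y => Polynomial.aeval (M y) (L y).charpoly) =
      fun y => ∑ m ∈ Finset.range (Module.finrank k V + 1),
        (L y).charpoly.coeff m • (M y) ^ m := by
    funext y
    rw [Polynomial.aeval_eq_sum_range, LinearMap.charpoly_natDegree]
  rw [this]
  exact VP.sum _ fun m => VP.smul (hL.charpoly m) (hM.pow m)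

end VP

section LA

variable {k : Type} [Field k]
variable {V W U : Type} [AddCommGroup V] [Module k V] [AddCommGroup W] [Module k W]
  [AddCommGroup U] [Module k U]

theorem ginv (D : V →ₗ[k] W) : ∃ S : W →ₗ[k] V, ∀ v, D (S (D v)) = D v := by
  obtain ⟨s, hs⟩ := D.rangeRestrict.exists_rightInverse_of_surjective D.range_rangeRestrict
  obtain ⟨S, hS⟩ := s.exists_extend
  refine ⟨S, fun v => ?_⟩
  have h1 : S (D v) = s ⟨D v, v, rfl⟩ := by rw [← hS]; rfl
  have h2 := LinearMap.congr_fun hs ⟨D v, v, rfl⟩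
  rw [h1]
  exact congrArg Subtype.val h2

theorem contraction (D0 : V →ₗ[k] W) (D1 : W →ₗ[k] U)
    (h : ∀ w, D1 w = 0 → ∃ v, D0 v = w) :
    ∃ (S : W →ₗ[k] V) (T : U →ₗ[k] W), D0 ∘ₗ S + T ∘ₗ D1 = LinearMap.id := by
  obtain ⟨T, hT⟩ := ginv D1
  obtain ⟨S0, hS0⟩ := ginv D0
  refine ⟨S0 ∘ₗ (LinearMap.id - T ∘ₗ D1), T, ?_⟩
  ext w
  obtain ⟨v, hv⟩ := h (w - T (D1 w)) (by simp [hT])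
  have : D0 (S0 (w - T (D1 w))) = w - T (D1 w) := by rw [← hv, hS0]
  simp only [LinearMap.add_apply, LinearMap.comp_apply, LinearMap.sub_apply, LinearMap.id_apply,
    this]
  abel

theorem aeval_intertwine (D : V →ₗ[k] W) (g : Module.End k V) (h : Module.End k W)
    (hD : h ∘ₗ D = D ∘ₗ g) (p : Polynomial k) (v : V) :
    Polynomial.aeval h p (D v) = D (Polynomial.aeval g p v) := by
  have hp : ∀ m : ℕ, ∀ v, (h ^ m) (D v) = D ((g ^ m) v) := by
    intro m
    induction m with
    | zero => simp
    | succ m ih =>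
      intro v
      have h1 : h (D v) = D (g v) := LinearMap.congr_fun hD v
      rw [pow_succ, pow_succ, Module.End.mul_apply, Module.End.mul_apply, h1, ih]
  simp [Polynomial.aeval_eq_sum_range, LinearMap.sum_apply, hp]

end LA

section Rep

variable {k A : Type} [Field k] [Ring A] [Algebra k A]
variable {V : Type} [AddCommGroup V] [Module k V]

/-- The module of a representation. -/
def RepMod (_ρ : A →ₐ[k] Module.End k V) : Type := V

instance (ρ : A →ₐ[k] Module.End k V) : AddCommGroup (RepMod ρ) :=
  inferInstanceAs (AddCommGroup V)

instance (ρ : A →ₐ[k] Module.End k V) : Module A (RepMod ρ) :=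
  letI : Module (Module.End k V) (RepMod ρ) := inferInstanceAs (Module (Module.End k V) V)
  Module.compHom (RepMod ρ) ρ.toRingHom

theorem RepMod.smul_def (ρ : A →ₐ[k] Module.End k V) (a : A) (v : RepMod ρ) :
    a • v = (ρ a (v : V) : V) := rfl

/-- first differential -/
def D0 (x y : A →ₐ[k] Module.End k V) :
    Module.End k V →ₗ[k] (A →ₗ[k] Module.End k V) :=
  LinearMap.mk₂ k (fun φ a => y a * φ - φ * x a)
    (by intros; simp [mul_add, add_mul]; abel) (by intros; simp [smul_sub])
    (by intros; simp [mul_add, add_mul]; abel) (by intros; simp [smul_sub])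

theorem D0_apply (x y : A →ₐ[k] Module.End k V) (φ a) : D0 x y φ a = y a * φ - φ * x a := rfl

/-- second differential, for a fixed cochain -/
def D1' (x y : A →ₐ[k] Module.End k V) (θ : A →ₗ[k] Module.End k V) :
    A →ₗ[k] A →ₗ[k] Module.End k V :=
  LinearMap.mk₂ k (fun a b => y a * θ b - θ (a * b) + θ a * x b)
    (by intros; simp [mul_add, add_mul]; abel) (by intros; simp [smul_sub, smul_add])
    (by intros; simp [mul_add, add_mul]; abel) (by intros; simp [smul_sub, smul_add])

/-- second differential -/
def D1 (x y : A →ₐ[k] Module.End k V) :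
    (A →ₗ[k] Module.End k V) →ₗ[k] (A →ₗ[k] A →ₗ[k] Module.End k V) where
  toFun := D1' x y
  map_add' θ η := by
    ext1 a; ext1 b
    simp only [D1', LinearMap.mk₂_apply, LinearMap.add_apply, mul_add, add_mul]; abel
  map_smul' c θ := by
    ext1 a; ext1 b
    simp [D1', LinearMap.mk₂_apply, smul_sub, smul_add]

theorem D1_apply (x y : A →ₐ[k] Module.End k V) (θ a b) :
    D1 x y θ a b = y a * θ b - θ (a * b) + θ a * x b := rfl

theorem D1_D0 (x y : A →ₐ[k] Module.End k V) : D1 x y ∘ₗ D0 x y = 0 := by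
  apply LinearMap.ext; intro φ
  ext1 a; ext1 b
  simp only [LinearMap.comp_apply, D1_apply, D0_apply, map_mul, LinearMap.zero_apply]
  noncomm_ring

/-- The extension attached to a derivation. -/
def extRep (x : A →ₐ[k] Module.End k V) (θ : A →ₗ[k] Module.End k V)
    (h : ∀ a b, θ (a * b) = x a * θ b + θ a * x b) : A →ₐ[k] Module.End k (V × V) :=
  AlgHom.ofLinearMap
    { toFun := fun a => LinearMap.prod (x a ∘ₗ LinearMap.fst k V V + θ a ∘ₗ LinearMap.snd k V V)
        (x a ∘ₗ LinearMap.snd k V V)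
      map_add' := by
        intro a b
        apply LinearMap.ext; rintro ⟨v, w⟩
        refine Prod.ext ?_ ?_
        · simp; abel
        · simp
      map_smul' := by
        intro c a
        apply LinearMap.ext; rintro ⟨v, w⟩
        simp }
    (by
      have h1 : θ 1 = 0 := by simpa using h 1 1
      apply LinearMap.ext; rintro ⟨v, w⟩
      simp [h1])
    (by
      intro a b
      apply LinearMap.ext; rintro ⟨v, w⟩
      simp [h, add_assoc])

theorem extRep_apply (x : A →ₐ[k] Module.End k V) (θ : A →ₗ[k] Module.End k V) (h) (a : A)
    (v w : V) : extRep x θ h a (v, w) = (x a v + θ a w, x a w) := rfl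

theorem exact_of_rigid (x : A →ₐ[k] Module.End k V) (hx : SelfExtOneVanishes A (RepMod x))
    (θ : A →ₗ[k] Module.End k V) (hθ : D1 x x θ = 0) : ∃ φ, D0 x x φ = θ := by
  have h : ∀ a b, θ (a * b) = x a * θ b + θ a * x b := by
    intro a b
    have := LinearMap.congr_fun (LinearMap.congr_fun hθ a) b
    rw [D1_apply] at this
    have h2 : x a * θ b + θ a * x b - θ (a * b) = 0 := by
      rw [← this.trans (by rfl : _ = (0 : Module.End k V))]; abel
    exact (sub_eq_zero.mp h2).symm
  let f : RepMod x →ₗ[A] RepMod (extRep x θ h) :=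
    { toFun := fun v => ((v, 0) : V × V)
      map_add' := fun v w => (LinearMap.inl k V V).map_add v w
      map_smul' := fun a v => by
        have h0 : ∀ v : V, (x a v, (0 : V)) = extRep x θ h a ((v, 0) : V × V) := by
          intro v
          rw [extRep_apply]; simp
        exact h0 v }
  let g : RepMod (extRep x θ h) →ₗ[A] RepMod x :=
    { toFun := fun v => (show V × V from v).2
      map_add' := fun v w => rfl
      map_smul' := fun a v => rfl }
  obtain ⟨s, hs⟩ := hx _ f g (fun v w hvw => congrArg (fun z : V × V => z.1) hvw)
    (fun v => ⟨((0, v) : V × V), rfl⟩) (by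
      ext z
      constructor
      · rintro ⟨v, rfl⟩
        rfl
      · intro hz
        have hz' : (show V × V from z).2 = 0 := hz
        exact ⟨(show V × V from z).1, Prod.ext rfl hz'.symm⟩)
  have hs2 : ∀ v : V, (show V × V from s v).2 = v := fun v => LinearMap.congr_fun hs v
  have hsm : ∀ (a : A) (v : V), (show V × V from s (x a v : V)) =
      extRep x θ h a (show V × V from s v) := fun a v => s.map_smul a v
  let φ : Module.End k V :=
    { toFun := fun v => (show V × V from s v).1
      map_add' := fun v w => congrArg (fun z : V × V => z.1) (s.map_add v w)
      map_smul' := fun c v => by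
        have h1 := hsm (algebraMap k A c) v
        simp only [AlgHom.commutes, Module.algebraMap_end_apply] at h1
        exact congrArg (fun z : V × V => z.1) h1 }
  refine ⟨-φ, ?_⟩
  apply LinearMap.ext; intro a
  apply LinearMap.ext; intro v
  have h1 := congrArg (fun z : V × V => z.1) (hsm a v)
  have h2 : φ (x a v) = x a (φ v) + θ a v := by
    have h3 : (show V × V from s v) = (φ v, v) := Prod.ext rfl (hs2 v)
    rw [h3, extRep_apply] at h1
    exact h1
  rw [D0_apply]
  simp [h2]

theorem rigid_congr {X Y : Type} [AddCommGroup X] [Module A X] [AddCommGroup Y] [Module A Y]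
    (e : X ≃ₗ[A] Y) (h : SelfExtOneVanishes A X) : SelfExtOneVanishes A Y := by
  intro E _ _ f g hf hg hfg
  obtain ⟨s, hs⟩ := h E (f ∘ₗ e.toLinearMap) (e.symm.toLinearMap ∘ₗ g)
    (hf.comp e.injective) (e.symm.surjective.comp hg) (by
      rw [LinearMap.range_comp, LinearEquiv.range, Submodule.map_top, hfg, LinearEquiv.ker_comp])
  refine ⟨s ∘ₗ e.symm.toLinearMap, ?_⟩
  ext y
  have := LinearMap.congr_fun hs (e.symm y)
  simpa using this

theorem exists_rep (n : ℕ) (X : Type) [AddCommGroup X] [Module A X] (h : IsKDimEq k A X n) :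
    ∃ ρ : A →ₐ[k] Module.End k (Fin n → k), Nonempty (X ≃ₗ[A] RepMod ρ) := by
  letI : Module k X := Module.compHom X (algebraMap k A)
  obtain ⟨h1, h2⟩ := h
  haveI : Module.Finite k X := h1
  haveI : IsScalarTower k A X := ⟨fun c a v => by
    rw [Algebra.smul_def, mul_smul]; rfl⟩
  let e : X ≃ₗ[k] (Fin n → k) := LinearEquiv.ofFinrankEq _ _ (by simpa using h2)
  let ρ : A →ₐ[k] Module.End k (Fin n → k) :=
    (e.conjAlgEquiv k).toAlgHom.comp (Algebra.lsmul k k X)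
  let e' : X ≃ₗ[A] RepMod ρ :=
    { toFun := fun v => e v
      invFun := fun v => e.symm v
      map_add' := fun v w => e.map_add v w
      map_smul' := fun a v => by
        change e (a • v) = ρ a (e v)
        simp [ρ]
      left_inv := fun v => e.symm_apply_apply v
      right_inv := fun v => e.apply_symm_apply v }
  exact ⟨ρ, ⟨e'⟩⟩

set_option synthInstance.maxHeartbeats 400000 in
set_option synthInstance.maxSize 100000 in
set_option maxSynthPendingDepth 10 in
set_option maxHeartbeats 1000000 in
theorem key [FiniteDimensional k A] [FiniteDimensional k V]
    (F : Subalgebra k ((A →ₐ[k] Module.End k V) → k))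
    (hF : ∀ a : A, VP F (fun y : A →ₐ[k] Module.End k V => y a))
    (x : A →ₐ[k] Module.End k V) (hx : SelfExtOneVanishes A (RepMod x)) :
    ∃ f ∈ F, f x ≠ 0 ∧ ∀ y, f y ≠ 0 → Nonempty (RepMod x ≃ₗ[A] RepMod y) := by
  obtain ⟨S, T, hST⟩ := contraction (U := A →ₗ[k] A →ₗ[k] Module.End k V) (D0 x x) (D1 x x) (exact_of_rigid x hx)
  have hD0 : VP F (fun y => D0 x y) := by
    refine VP.of_apply fun φ => VP.of_apply fun a => ?_
    simp only [D0_apply]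
    exact ((hF a).map (LinearMap.mulRight k φ)).sub (VP.const _)
  have hD1 : VP F (fun y => D1 x y) := by
    refine VP.of_apply fun φ => VP.of_apply fun a => VP.of_apply fun b => ?_
    simp only [D1_apply]
    exact (((hF a).map (LinearMap.mulRight k (φ b))).sub (VP.const _)).add (VP.const _)
  let H : (A →ₐ[k] Module.End k V) → Module.End k (A →ₗ[k] Module.End k V) :=
    fun y => D0 x y ∘ₗ S + T ∘ₗ D1 x y
  have hH : VP F H := ((VP.const S).comp hD0).add (hD1.comp (VP.const T))
  let G : (A →ₐ[k] Module.End k V) → Module.End k (Module.End k V) := fun y => S ∘ₗ D0 x y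
  have hG : VP F G := hD0.comp (VP.const S)
  let ψ : (A →ₐ[k] Module.End k V) → Module.End k V :=
    fun y => Polynomial.aeval (G y) (H y).charpoly 1
  have hψ : VP F ψ := (hH.aeval_charpoly hG).app (VP.const 1)
  have hker : ∀ y, D0 x y (ψ y) = 0 := by
    intro y
    have h1 : H y ∘ₗ D0 x y = D0 x y ∘ₗ G y := by
      simp only [H, G, LinearMap.add_comp, LinearMap.comp_assoc, D1_D0, LinearMap.comp_zero,
        add_zero]
    rw [← aeval_intertwine _ _ _ h1, LinearMap.aeval_self_charpoly, LinearMap.zero_apply]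
  refine ⟨fun y => LinearMap.det (ψ y), hψ.det, ?_, ?_⟩
  · have hG1 : G x 1 = 0 := by
      have : D0 x x 1 = 0 := by ext1 a; simp [D0_apply]
      simp [G, this]
    have hpx : ψ x = (H x).charpoly.coeff 0 • (1 : Module.End k V) := by
      have h2 := aeval_intertwine (LinearMap.toSpanSingleton k _ (1 : Module.End k V)) 0 (G x)
        (by ext1; simp [hG1]) (H x).charpoly 1
      simp only [LinearMap.toSpanSingleton_apply, one_smul] at h2
      change Polynomial.aeval (G x) (H x).charpoly 1 = _
      rw [h2, ← map_zero (algebraMap k (Module.End k k)), Polynomial.aeval_algebraMap_apply]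
      simp [Polynomial.coeff_zero_eq_aeval_zero]
    have hc : (H x).charpoly.coeff 0 ≠ 0 := by
      intro h0
      have := LinearMap.det_eq_sign_charpoly_coeff (H x)
      rw [h0, show H x = LinearMap.id from hST] at this
      simp at this
    simp only [hpx, LinearMap.det_smul]
    simp [hc]
  · intro y hy
    have hb : Function.Bijective (ψ y) :=
      (Module.End.isUnit_iff _).mp ((LinearMap.isUnit_iff_isUnit_det _).mpr (isUnit_iff_ne_zero.mpr hy))
    let L : RepMod x →ₗ[A] RepMod y :=
      { toFun := fun v => ψ y v
        map_add' := fun v w => (ψ y).map_add v w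
        map_smul' := fun a v => by
          have h1 := LinearMap.congr_fun (hker y) a
          rw [D0_apply] at h1
          have h2 := LinearMap.congr_fun (sub_eq_zero.mp (h1.trans (by rfl : _ = (0 : Module.End k V)))) v
          exact h2.symm }
    exact ⟨LinearEquiv.ofBijective L hb⟩

end Rep

end RigidFin

open RigidFin in
theorem finitely_many_rigid_modules_of_dim (k A : Type) [Field k] [Ring A] [Algebra k A]
    [FiniteDimensional k A] (n : ℕ) (hn : 0 < n) :
    ∃ (t : ℕ) (Xs : Fin t → ModuleCat A),
      ∀ (X : Type) [AddCommGroup X] [Module A X],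
        IsKDimEq k A X n → SelfExtOneVanishes A X →
        ∃ i : Fin t, Nonempty (X ≃ₗ[A] Xs i) := by
  classical
  let P := A →ₐ[k] Module.End k (Fin n → k)
  let b := Module.finBasis k A
  let B := Module.finBasis k (Module.End k (Fin n → k))
  let gen := fun (q : Fin (Module.finrank k A) ×
    Fin (Module.finrank k (Module.End k (Fin n → k)))) (y : P) => B.coord q.2 (y (b q.1))
  let F : Subalgebra k (P → k) := Algebra.adjoin k (Set.range gen)
  have hF : ∀ a : A, VP F (fun y : P => y a) := by
    intro a
    have h1 : (fun y : P => y a) = fun y => ∑ i, b.repr a i • ∑ j, gen (i, j) y • B j := by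
      funext y
      conv_lhs => rw [← b.sum_repr a]
      simp only [map_sum, map_smul]
      refine Finset.sum_congr rfl fun i _ => ?_
      congr 1
      exact (B.sum_repr (y (b i))).symm
    rw [h1]
    exact VP.sum _ fun i => VP.smul (F.algebraMap_mem _) <| VP.sum _ fun j =>
      VP.smul (Algebra.subset_adjoin ⟨_, rfl⟩) (VP.const _)
  haveI : IsNoetherianRing F := by
    have hfg : F.FG := Subalgebra.fg_def.mpr ⟨_, Set.finite_range gen, rfl⟩
    have : Algebra.FiniteType k F := F.fg_iff_finiteType.mp hfg
    exact Algebra.FiniteType.isNoetherianRing k F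
  let R := {x : P // SelfExtOneVanishes A (RepMod x)}
  choose f hfF hfx hfy using fun x : R => key F hF x.1 x.2
  let f' : R → F := fun x => ⟨f x, hfF x⟩
  obtain ⟨s, hs, hspan⟩ := (Submodule.fg_span_iff_fg_span_finset_subset (Set.range f')).mp
    (IsNoetherian.noetherian (Submodule.span F (Set.range f')))
  choose r hr using fun z : s => hs z.2
  refine ⟨s.card, fun i => ModuleCat.of A (ULift (RepMod (r (s.equivFin.symm i)).1)), ?_⟩
  intro X _ _ hdim hrig
  obtain ⟨ρ, ⟨e⟩⟩ := exists_rep n X hdim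
  let x : R := ⟨ρ, rigid_congr e hrig⟩
  have hx : f' x ∈ Submodule.span F (s : Set F) := by
    rw [← hspan]; exact Submodule.subset_span ⟨x, rfl⟩
  have : ∃ z ∈ s, (z : P → k) ρ ≠ 0 := by
    by_contra! hcon
    have hle : Submodule.span F (s : Set F) ≤ RingHom.ker (ev F ρ) :=
      Submodule.span_le.mpr fun z hz => hcon z hz
    exact hfx x (hle hx)
  obtain ⟨z, hz, hzρ⟩ := this
  obtain ⟨i, hi⟩ := s.equivFin.symm.surjective ⟨z, hz⟩
  have hzr : (z : P → k) = f (r (s.equivFin.symm i)) := by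
    rw [hi]
    exact congrArg Subtype.val (hr ⟨z, hz⟩).symm
  rw [hzr] at hzρ
  obtain ⟨e'⟩ := hfy _ ρ hzρ
  exact ⟨i, ⟨(e.trans e'.symm).trans ULift.moduleEquiv.symm⟩⟩
end
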